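/- (Theorem 5.1, stated with q replaced by q^2 to avoid half-integer powers.) Let q, a be complex numbers with 0 < |q| < 1 and a q^{2m} ≠ 1 for all m ≥ 1, and let k ≥ 2 and 1 ≤ i ≤ k be integers. Then the following three expressions are equal: (1) ∑_{n=0}^{∞} (-1)^n a^{kn} q^{2kn^2 + (2k-2i+1)n} · [(-q;q^2)_n (-a q^{2n+3}; q^2)_∞ / ((q^2;q^2)_n (a q^{2n+2}; q^2)_∞)] · (1 + a q^{2n+1} - (1 + q^{2n+1}) a^i q^{(2i-1)(2n+1)}); (2) ∑_{s_1 ≥ ⋯ ≥ s_{k-1} ≥ 0} a^{s_1 + ⋯ + s_{k-1}} (-q;q^2)_{s_1} · q^{s_1^2 + 2(s_2^2 + ⋯ + s_{k-1}^2) + 2(s_i + ⋯ + s_{k-1})} / [(q^2;q^2)_{s_1-s_2} (q^2;q^2)_{s_2-s_3} ⋯ (q^2;q^2)_{s_{k-1}}]; (3) ∑_{s_1 ≥ ⋯ ≥ s_{2k-2} ≥ 0} a^{s_1 + s_3 + ⋯ + s_{2k-3}} q^{s_1^2 + ⋯ + s_{2k-2}^2 + 2(s_{2i-1} + s_{2i+1}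 + ⋯ + s_{2k-3})} / [(q^2;q^2)_{s_1-s_2} (q^2;q^2)_{s_2-s_3} ⋯ (q^2;q^2)_{s_{2k-2}}], where in (2) the term 2(s_i + ⋯ + s_{k-1}) is empty when i = k, and in (3) the term 2(s_{2i-1} + s_{2i+1} + ⋯ + s_{2k-3}) is the sum over odd indices from 2i-1 to 2k-3, empty when i = k. -/

import Mathlib

/-- The finite q-Pochhammer symbol `(x;q)_n = ∏_{j=0}^{n-1} (1 - x q^j)`. -/
noncomputable def qPoch (x q : ℂ) (n : ℕ) : ℂ := ∏ j ∈ Finset.range n, (1 - x * q ^ j)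

/-- The infinite q-Pochhammer symbol `(x;q)_∞ = ∏_{j=0}^{∞} (1 - x q^j)`. -/
noncomputable def qPochInf (x q : ℂ) : ℂ := ∏' j : ℕ, (1 - x * q ^ j)

open Filter Topology

lemma qPoch_zero (x Q : ℂ) : qPoch x Q 0 = 1 := by simp [qPoch]

lemma qPoch_succ (x Q : ℂ) (n : ℕ) : qPoch x Q (n + 1) = qPoch x Q n * (1 - x * Q ^ n) := by
  simp [qPoch, Finset.prod_range_succ]

lemma qPoch_add (x Q : ℂ) (m n : ℕ) :
    qPoch x Q (m + n) = qPoch x Q m * qPoch (x * Q ^ m) Q n := by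
  simp only [qPoch, Finset.prod_range_add]
  congr 1
  refine Finset.prod_congr rfl fun j _ => ?_
  rw [pow_add]; ring

lemma qPoch_succ_left (x Q : ℂ) (n : ℕ) :
    qPoch x Q (n + 1) = (1 - x) * qPoch (x * Q) Q n := by
  rw [add_comm, qPoch_add]; simp [qPoch]

lemma qPoch_ne_zero {x Q : ℂ} (h : ∀ j : ℕ, x * Q ^ j ≠ 1) (n : ℕ) : qPoch x Q n ≠ 0 := by
  refine Finset.prod_ne_zero_iff.2 fun j _ => ?_
  exact sub_ne_zero.2 (h j).symm

lemma Q_pow_ne {Q : ℂ} (hQ : ‖Q‖ < 1) (j : ℕ) : Q * Q ^ j ≠ 1 := by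
  intro h
  have h2 : ‖Q‖ ^ (j + 1) < 1 := pow_lt_one₀ (norm_nonneg _) hQ (by omega)
  rw [← norm_pow, pow_succ', h] at h2
  simp at h2

lemma qPoch_QQ_ne {Q : ℂ} (hQ : ‖Q‖ < 1) (n : ℕ) : qPoch Q Q n ≠ 0 :=
  qPoch_ne_zero (Q_pow_ne hQ) n

lemma summable_aux {Q : ℂ} (hQ : ‖Q‖ < 1) (x : ℂ) : Summable fun j : ℕ => ‖-(x * Q ^ j)‖ := by
  simp only [norm_neg, norm_mul, norm_pow]
  exact (summable_geometric_of_lt_one (norm_nonneg _) hQ).mul_left _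

lemma qPoch_tendsto {Q : ℂ} (hQ : ‖Q‖ < 1) (x : ℂ) :
    Tendsto (fun n => qPoch x Q n) atTop (𝓝 (qPochInf x Q)) := by
  have := (multipliable_one_add_of_summable (summable_aux hQ x)).hasProd.tendsto_prod_nat
  simpa [qPoch, qPochInf, sub_eq_add_neg] using this

lemma qPochInf_ne_zero {x Q : ℂ} (hQ : ‖Q‖ < 1) (h : ∀ j : ℕ, x * Q ^ j ≠ 1) :
    qPochInf x Q ≠ 0 := by
  have := tprod_one_add_ne_zero_of_summable (f := fun j : ℕ => -(x * Q ^ j))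
    (fun j => by rw [← sub_eq_add_neg]; exact sub_ne_zero.2 (h j).symm) (summable_aux hQ x)
  simpa [qPochInf, sub_eq_add_neg] using this

lemma qPochInf_split {Q : ℂ} (hQ : ‖Q‖ < 1) (x : ℂ) (n : ℕ) :
    qPochInf x Q = qPoch x Q n * qPochInf (x * Q ^ n) Q := by
  have h1 := (qPoch_tendsto hQ x).comp (tendsto_add_atTop_nat n)
  have h2 := (qPoch_tendsto hQ (x * Q ^ n)).const_mul (qPoch x Q n)
  refine tendsto_nhds_unique h1 (h2.congr fun m => ?_)
  simp only [Function.comp]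
  rw [add_comm m n, qPoch_add]

lemma bdd_of_tendsto {u : ℕ → ℂ} {l : ℂ} (h : Tendsto u atTop (𝓝 l)) :
    ∃ C : ℝ, 1 ≤ C ∧ ∀ n, ‖u n‖ ≤ C := by
  obtain ⟨C, hC⟩ := (Metric.isBounded_range_of_tendsto u h).exists_norm_le
  exact ⟨max 1 C, le_max_left _ _, fun n => (hC _ ⟨n, rfl⟩).trans (le_max_right _ _)⟩

lemma qPoch_bdd {Q : ℂ} (hQ : ‖Q‖ < 1) (x : ℂ) :
    ∃ C : ℝ, 1 ≤ C ∧ ∀ n, ‖qPoch x Q n‖ ≤ C := bdd_of_tendsto (qPoch_tendsto hQ x)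

lemma qPoch_inv_bdd {x Q : ℂ} (hQ : ‖Q‖ < 1) (h : ∀ j : ℕ, x * Q ^ j ≠ 1) :
    ∃ C : ℝ, 1 ≤ C ∧ ∀ n, ‖(qPoch x Q n)⁻¹‖ ≤ C :=
  bdd_of_tendsto ((qPoch_tendsto hQ x).inv₀ (qPochInf_ne_zero hQ h))

/-- q-binomial coefficients via the Pascal recursion. -/
noncomputable def qb (Q : ℂ) : ℕ → ℕ → ℂ
  | _, 0 => 1
  | 0, _ + 1 => 0
  | M + 1, j + 1 => qb Q M (j + 1) + Q ^ (M - j) * qb Q M j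

lemma qb_zero (Q : ℂ) (M : ℕ) : qb Q M 0 = 1 := by cases M <;> simp [qb]

lemma qb_gt (Q : ℂ) : ∀ (M j : ℕ), M < j → qb Q M j = 0
  | 0, j + 1, _ => by simp [qb]
  | M + 1, j + 1, h => by
    rw [qb, qb_gt Q M (j + 1) (by omega), qb_gt Q M j (by omega)]; simp

lemma qb_mul (Q : ℂ) : ∀ (M j : ℕ), j ≤ M →
    qb Q M j * (qPoch Q Q j * qPoch Q Q (M - j)) = qPoch Q Q M := by
  intro M
  induction M with
  | zero => intro j hj; obtain rfl : j = 0 := by omega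
            simp [qb, qPoch]
  | succ M ih =>
    intro j hj
    rcases j with _ | j
    · simp [qb, qPoch]
    · rw [qb]
      obtain ⟨d, rfl⟩ : ∃ d, M = j + d := ⟨M - j, by omega⟩
      have e1 := ih j (by omega)
      rw [show j + d - j = d by omega] at e1 ⊢
      rw [show j + d + 1 - (j + 1) = d by omega, qPoch_succ _ _ (j + d)]
      rcases d with _ | d
      · rw [qb_gt Q _ _ (by omega)]
        rw [qPoch_succ]
        simp only [add_zero] at e1 ⊢
        linear_combination (1 - Q * Q ^ j) * e1
      · have e2 := ih (j + 1) (by omega)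
        rw [show j + (d + 1) - (j + 1) = d by omega] at e2
        have e3 : qPoch Q Q (d + 1) = qPoch Q Q d * (1 - Q * Q ^ d) := qPoch_succ _ _ _
        have e4 : qPoch Q Q (j + 1) = qPoch Q Q j * (1 - Q * Q ^ j) := qPoch_succ _ _ _
        have : (qb Q (j + (d + 1)) (j + 1) + Q ^ (d + 1) * qb Q (j + (d + 1)) j) *
          (qPoch Q Q (j + 1) * qPoch Q Q (d + 1)) =
          (qb Q (j + (d + 1)) (j + 1) * (qPoch Q Q (j + 1) * qPoch Q Q d)) * (1 - Q * Q ^ d)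
          + Q ^ (d + 1) * (qb Q (j + (d + 1)) j * (qPoch Q Q j * qPoch Q Q (d + 1))) *
            (1 - Q * Q ^ j) := by
          rw [e4, e3]; ring
        rw [this, e1, e2]; ring

lemma qb_eq {Q : ℂ} (hQ : ‖Q‖ < 1) {M j : ℕ} (h : j ≤ M) :
    qb Q M j = qPoch Q Q M / (qPoch Q Q j * qPoch Q Q (M - j)) := by
  rw [eq_div_iff (mul_ne_zero (qPoch_QQ_ne hQ _) (qPoch_QQ_ne hQ _)), qb_mul Q M j h]

/-- Homogeneous q-Vandermonde. -/
lemma qVand (Q z : ℂ) : ∀ (M : ℕ) (c : ℂ),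
    ∑ j ∈ Finset.range (M + 1), qb Q M j * ((-1) ^ j * Q ^ (j.choose 2) *
      (∏ l ∈ Finset.range j, (z - c * Q ^ l)) * qPoch (c * Q ^ j) Q (M - j)) = qPoch z Q M := by
  intro M
  induction M with
  | zero => intro c; simp [qb, qPoch]
  | succ M ih =>
    intro c
    rw [Finset.sum_range_succ']
    have key : ∀ j ∈ Finset.range (M + 1), qb Q (M + 1) (j + 1) * ((-1) ^ (j + 1) *
        Q ^ ((j + 1).choose 2) * (∏ l ∈ Finset.range (j + 1), (z - c * Q ^ l)) *
        qPoch (c * Q ^ (j + 1)) Q (M + 1 - (j + 1))) =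
        (1 - c * Q ^ M) * (qb Q M (j + 1) * ((-1) ^ (j + 1) *
        Q ^ ((j + 1).choose 2) * (∏ l ∈ Finset.range (j + 1), (z - c * Q ^ l)) *
        qPoch (c * Q ^ (j + 1)) Q (M - (j + 1)))) +
        (-(Q ^ M * (z - c))) * (qb Q M j * ((-1) ^ j * Q ^ (j.choose 2) *
          (∏ l ∈ Finset.range j, (z - c * Q * Q ^ l)) * qPoch (c * Q * Q ^ j) Q (M - j))) := by
      intro j hj
      have hj' : j ≤ M := by simpa [Nat.lt_succ_iff] using hj
      obtain ⟨d, rfl⟩ := Nat.exists_eq_add_of_le hj'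
      have e1 : (j + 1).choose 2 = j.choose 2 + j := by
        rw [Nat.choose_succ_succ' j 1]; simp; ring
      have e2 : ∏ l ∈ Finset.range (j + 1), (z - c * Q ^ l) =
          (z - c) * ∏ l ∈ Finset.range j, (z - c * Q * Q ^ l) := by
        rw [Finset.prod_range_succ']
        simp only [pow_zero, mul_one]
        rw [mul_comm]
        congr 1
        refine Finset.prod_congr rfl fun l _ => ?_
        ring
      rw [qb, e2, e1, show j + d + 1 - (j + 1) = d by omega, show j + d - j = d by omega,
        show c * Q ^ (j + 1) = c * Q * Q ^ j by ring]
      rcases d with _ | d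
      · rw [qb_gt Q _ (j + 1) (by omega)]
        simp only [add_zero]
        ring
      · rw [show j + (d + 1) - (j + 1) = d by omega, qPoch_succ]
        ring
    rw [Finset.sum_congr rfl key, Finset.sum_add_distrib, ← Finset.mul_sum, ← Finset.mul_sum,
      ih (c * Q)]
    have i1 := ih c
    have i2 := Finset.sum_range_succ' (fun j => qb Q M j * ((-1) ^ j * Q ^ (j.choose 2) *
      (∏ l ∈ Finset.range j, (z - c * Q ^ l)) * qPoch (c * Q ^ j) Q (M - j))) (M + 1)
    rw [Finset.sum_range_succ, ih c, qb_gt Q M (M + 1) (by omega)] at i2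
    simp only [qb_zero, pow_zero, Nat.choose_zero_succ, Finset.range_zero, Finset.prod_empty,
      mul_one, one_mul, Nat.sub_zero, zero_mul, add_zero] at i2 ⊢
    have i3 := eq_sub_of_add_eq i2.symm
    rw [i3, qPoch_succ, qPoch_succ]
    ring

lemma vandDiv {Q c : ℂ} (hQ : ‖Q‖ < 1) (hc : ∀ j : ℕ, c * Q ^ j ≠ 1) (z : ℂ) (M : ℕ) :
    ∑ j ∈ Finset.range (M + 1), (-1) ^ j * Q ^ (j.choose 2) *
      (∏ l ∈ Finset.range j, (z - c * Q ^ l)) /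
        (qPoch Q Q (M - j) * (qPoch Q Q j * qPoch c Q j)) =
      qPoch z Q M / (qPoch Q Q M * qPoch c Q M) := by
  rw [← qVand Q z M c, Finset.sum_div]
  refine Finset.sum_congr rfl fun j hj => ?_
  have hj' : j ≤ M := by simpa [Nat.lt_succ_iff] using hj
  obtain ⟨d, rfl⟩ := Nat.exists_eq_add_of_le hj'
  rw [qb_eq hQ hj']
  have h1 := qPoch_add c Q j d
  have n1 := qPoch_ne_zero hc (j + d)
  have n2 := qPoch_ne_zero hc j
  have n3 := qPoch_QQ_ne hQ (j + d)
  have n4 := qPoch_QQ_ne hQ j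
  rw [show j + d - j = d by omega]
  have n5 := qPoch_QQ_ne hQ d
  have n6 : qPoch (c * Q ^ j) Q d ≠ 0 := by
    intro h; rw [h, mul_zero] at h1; exact n1 h1
  rw [h1]
  field_simp

lemma prod_zero_sub (Q c : ℂ) (j : ℕ) :
    ∏ l ∈ Finset.range j, (0 - c * Q ^ l) = (-1) ^ j * c ^ j * Q ^ (j.choose 2) := by
  induction j with
  | zero => simp
  | succ j ih =>
    rw [Finset.prod_range_succ, ih, Nat.choose_succ_succ' j 1]
    simp only [Nat.choose_one_right]
    ring

/-- Kernel of a Bailey pair relative to `a`. -/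
noncomputable def bK (a Q : ℂ) (s r : ℕ) : ℂ :=
  if r ≤ s then 1 / (qPoch Q Q (s - r) * qPoch (a * Q) Q (s + r)) else 0

lemma bK_gt (a Q : ℂ) {s r : ℕ} (h : s < r) : bK a Q s r = 0 := by
  simp [bK, not_le.2 h]

lemma bK_add (a Q : ℂ) (r j : ℕ) :
    bK a Q (r + j) r = 1 / (qPoch Q Q j * (qPoch (a * Q) Q (2 * r) *
      qPoch (a * Q ^ (2 * r + 1)) Q j)) := by
  rw [bK, if_pos (by omega), show r + j - r = j by omega, show r + j + r = 2 * r + j by ring,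
    qPoch_add]
  congr 4
  ring

lemma two_choose (j : ℕ) : j ^ 2 = 2 * j.choose 2 + j := by
  induction j with
  | zero => simp
  | succ j ih =>
    rw [Nat.choose_succ_succ' j 1]
    simp only [Nat.choose_one_right]
    nlinarith

lemma shift_ne {b Q : ℂ} (hb : ∀ j : ℕ, b * Q * Q ^ j ≠ 1) (r : ℕ) (j : ℕ) :
    b * Q ^ (r + 1) * Q ^ j ≠ 1 := by
  have := hb (r + j)
  rwa [show b * Q * Q ^ (r + j) = b * Q ^ (r + 1) * Q ^ j by ring] at this

lemma bailey_step {Q b : ℂ} (hQ : ‖Q‖ < 1) (hb : ∀ j : ℕ, b * Q * Q ^ j ≠ 1) (N r : ℕ) :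
    ∑ s ∈ Finset.range (N + 1), b ^ s * Q ^ (s ^ 2) / qPoch Q Q (N - s) * bK b Q s r =
      b ^ r * Q ^ (r ^ 2) * bK b Q N r := by
  by_cases h : r ≤ N
  swap
  · rw [bK_gt _ _ (not_le.1 h), mul_zero]
    refine Finset.sum_eq_zero fun s hs => ?_
    rw [Finset.mem_range] at hs
    rw [bK_gt _ _ (by omega), mul_zero]
  obtain ⟨M, rfl⟩ := Nat.exists_eq_add_of_le h
  rw [add_assoc, Finset.sum_range_add, Finset.sum_eq_zero, zero_add]
  swap
  · intro s hs
    rw [Finset.mem_range] at hs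
    rw [bK_gt _ _ (by omega), mul_zero]
  have hc := shift_ne hb (2 * r)
  have key := vandDiv hQ hc 0 M
  have hz : qPoch 0 Q M = 1 := by simp [qPoch]
  rw [hz] at key
  rw [bK_add]
  have : b ^ r * Q ^ (r ^ 2) * (1 / (qPoch Q Q M * (qPoch (b * Q) Q (2 * r) *
      qPoch (b * Q ^ (2 * r + 1)) Q M))) = b ^ r * Q ^ (r ^ 2) / qPoch (b * Q) Q (2 * r) *
      (1 / (qPoch Q Q M * qPoch (b * Q ^ (2 * r + 1)) Q M)) := by
    field_simp
  rw [this, ← key, Finset.mul_sum]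
  refine Finset.sum_congr rfl fun j hj => ?_
  rw [bK_add, prod_zero_sub, show r + M - (r + j) = M - j by omega]
  have e1 : b ^ (r + j) * Q ^ ((r + j) ^ 2) = b ^ r * Q ^ (r ^ 2) * ((-1) ^ j * Q ^ (j.choose 2) *
      ((-1) ^ j * (b * Q ^ (2 * r + 1)) ^ j * Q ^ (j.choose 2))) := by
    have : (r + j) ^ 2 = r ^ 2 + 2 * r * j + (2 * j.choose 2 + j) := by rw [← two_choose]; ring
    rw [this]
    have h2 : ((-1 : ℂ)) ^ j * (-1) ^ j = 1 := by rw [← mul_pow]; simp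
    rw [mul_pow]
    linear_combination (-(b ^ r * Q ^ (r ^ 2) * Q ^ (j.choose 2) * b ^ j * (Q ^ (2 * r + 1)) ^ j *
      Q ^ (j.choose 2))) * h2
  rw [e1]
  field_simp

/-- The unit Bailey pair. -/
noncomputable def uc (a Q : ℂ) (r : ℕ) : ℂ :=
  (-1) ^ r * Q ^ (r.choose 2) * qPoch (a * Q) Q r / qPoch Q Q r

lemma bK_shift {a Q : ℂ} (ha : ∀ j : ℕ, a * Q * Q ^ j ≠ 1) {s r : ℕ} (h : r ≤ s) :
    bK (a * Q) Q s r / (1 - a * Q) = 1 / (qPoch Q Q (s - r) * qPoch (a * Q) Q (s + r + 1)) := by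
  rw [bK, if_pos h, qPoch_succ_left (a * Q)]
  have : (1 - a * Q) ≠ 0 := sub_ne_zero.2 (by simpa using (ha 0).symm)
  field_simp

lemma unit_partial {a Q : ℂ} (hQ : ‖Q‖ < 1) (ha : ∀ j : ℕ, a * Q * Q ^ j ≠ 1) (R : ℕ) :
    ∀ s, R + 1 ≤ s → ∑ r ∈ Finset.range (R + 1), uc a Q r * (1 - a * Q ^ (2 * r + 1)) *
      (1 / (qPoch Q Q (s - r) * qPoch (a * Q) Q (s + r + 1))) =
      (-1) ^ R * Q ^ ((R + 1).choose 2) * qPoch (a * Q) Q (R + 1) /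
       (qPoch Q Q R * qPoch Q Q (s - R - 1) * qPoch (a * Q) Q (s + R + 1) * (1 - Q ^ s)) := by
  induction R with
  | zero =>
    intro s hs
    obtain ⟨d, rfl⟩ : ∃ d, s = d + 1 := ⟨s - 1, by omega⟩
    have n1 := qPoch_QQ_ne hQ (d + 1)
    have n2 := qPoch_ne_zero ha (d + 1 + 1)
    simp only [zero_add, Finset.sum_range_one, uc, qPoch_zero, Nat.sub_zero, add_zero,
      Nat.add_sub_cancel, qPoch_succ Q Q d, qPoch_succ _ _ 0] at *
    rw [← pow_succ'] at *
    simp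
    field_simp
  | succ R ih =>
    intro s hs
    obtain ⟨d, rfl⟩ : ∃ d, s = R + 2 + d := ⟨s - (R + 2), by omega⟩
    rw [Finset.sum_range_succ, ih _ (by omega)]
    rw [show R + 2 + d - R - 1 = d + 1 by omega, show R + 2 + d - (R + 1) = d + 1 by omega,
      show d + 1 - 1 = d by omega]
    have n1 := qPoch_QQ_ne hQ (d + 1)
    have n2 := qPoch_QQ_ne hQ (R + 1)
    have n3 := qPoch_ne_zero ha (R + 2 + d + R + 1 + 1)
    have n4 : (1 - Q ^ (R + 2 + d)) ≠ 0 := by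
      have := Q_pow_ne hQ (R + 1 + d)
      rw [← pow_succ', show R + 1 + d + 1 = R + 2 + d by ring] at this
      exact sub_ne_zero.2 this.symm
    rw [show R + 2 + d + (R + 1) + 1 = R + 2 + d + R + 1 + 1 by ring]
    rw [uc]
    have e1 := qPoch_succ (a * Q) Q (R + 1)
    have e2 := qPoch_succ (a * Q) Q (R + 2 + d + R + 1)
    have e3 := qPoch_succ Q Q R
    have e4 := qPoch_succ Q Q d
    have e5 : (R + 1 + 1).choose 2 = (R + 1).choose 2 + (R + 1) := by
      rw [Nat.choose_succ_succ' (R + 1) 1]; simp; ring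
    rw [e4] at n1
    rw [e3] at n2
    rw [e2] at n3
    rw [e1, e2, e3, e4, e5]
    have m1 := left_ne_zero_of_mul n1
    have m2 := right_ne_zero_of_mul n1
    have m3 := left_ne_zero_of_mul n2
    have m4 := right_ne_zero_of_mul n2
    have m5 := left_ne_zero_of_mul n3
    have m6 := right_ne_zero_of_mul n3
    generalize qPoch Q Q R = p1 at *
    generalize qPoch Q Q d = p2 at *
    generalize qPoch (a * Q) Q (R + 2 + d + R + 1) = p3 at *
    generalize qPoch (a * Q) Q (R + 1) = p4 at *
    clear ih e1 e2 e3 e4 e5 n1 n2 n3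
    obtain ⟨w2, h2⟩ : ∃ w, w = 1 - Q * Q ^ d := ⟨_, rfl⟩
    obtain ⟨w4, h4⟩ : ∃ w, w = 1 - Q * Q ^ R := ⟨_, rfl⟩
    obtain ⟨w6, h6⟩ : ∃ w, w = 1 - a * Q * Q ^ (R + 2 + d + R + 1) := ⟨_, rfl⟩
    obtain ⟨w7, h7⟩ : ∃ w, w = 1 - Q ^ (R + 2 + d) := ⟨_, rfl⟩
    rw [← h2] at m2 ⊢
    rw [← h4] at m4 ⊢
    rw [← h6] at m6 ⊢
    rw [← h7] at n4 ⊢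
    field_simp
    rw [h2, h4, h6, h7]
    ring

lemma unit_pair {a Q : ℂ} (hQ : ‖Q‖ < 1) (ha : ∀ j : ℕ, a * Q * Q ^ j ≠ 1) (s : ℕ) :
    ∑ r ∈ Finset.range (s + 1), uc a Q r * (1 - a * Q ^ (2 * r + 1)) *
      (bK (a * Q) Q s r / (1 - a * Q)) = if s = 0 then 1 else 0 := by
  have e0 : ∀ r ∈ Finset.range (s + 1), uc a Q r * (1 - a * Q ^ (2 * r + 1)) *
      (bK (a * Q) Q s r / (1 - a * Q)) = uc a Q r * (1 - a * Q ^ (2 * r + 1)) *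
      (1 / (qPoch Q Q (s - r) * qPoch (a * Q) Q (s + r + 1))) := by
    intro r hr
    rw [bK_shift ha (by simpa [Nat.lt_succ_iff] using hr)]
  rw [Finset.sum_congr rfl e0]
  rcases s with _ | s
  · have : (1 - a * Q) ≠ 0 := sub_ne_zero.2 (by simpa using (ha 0).symm)
    simp [uc, qPoch]
    field_simp
  · rw [Finset.sum_range_succ, unit_partial hQ ha s _ le_rfl]
    have n2 := qPoch_QQ_ne hQ (s + 1)
    have n3 := qPoch_ne_zero ha (s + 1 + s + 1 + 1)
    have e2 := qPoch_succ (a * Q) Q (s + 1 + s + 1)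
    have e3 := qPoch_succ Q Q s
    rw [show s + 1 - s - 1 = 0 by omega, show s + 1 - (s + 1) = 0 by omega,
      show s + 1 + (s + 1) + 1 = s + 1 + s + 1 + 1 by ring, uc, qPoch_zero]
    have n4 : (1 - Q ^ (s + 1)) ≠ 0 := by
      have := Q_pow_ne hQ s
      rw [← pow_succ'] at this
      exact sub_ne_zero.2 this.symm
    have e4 : 1 - a * Q ^ (2 * (s + 1) + 1) = 1 - a * Q * Q ^ (s + 1 + s + 1) := by ring
    rw [e4]
    rw [e2] at n3 ⊢
    rw [e3] at n2 ⊢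
    rw [← pow_succ'] at *
    have m3 := left_ne_zero_of_mul n2
    have m5 := left_ne_zero_of_mul n3
    have m6 := right_ne_zero_of_mul n3
    simp only [Nat.add_eq_zero_iff, one_ne_zero, and_false, if_false]
    obtain ⟨w6, h6⟩ : ∃ w, w = 1 - a * Q * Q ^ (s + 1 + s + 1) := ⟨_, rfl⟩
    rw [← h6] at m6 ⊢
    field_simp
    ring

/-- The 1φ1 summation. -/
lemma phi_sum {Q c : ℂ} (hQ : ‖Q‖ < 1) (hc : ∀ j : ℕ, c * Q ^ j ≠ 1) (z : ℂ)
    (hsum : ∀ R : ℝ, 0 ≤ R → Summable fun j : ℕ => R ^ j * ‖Q‖ ^ (j.choose 2)) :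
    HasSum (fun j : ℕ => (-1) ^ j * Q ^ (j.choose 2) *
      (∏ l ∈ Finset.range j, (z - c * Q ^ l)) / (qPoch Q Q j * qPoch c Q j))
      (qPochInf z Q / qPochInf c Q) := by
  obtain ⟨C1, hC1, hb1⟩ := qPoch_bdd hQ Q
  obtain ⟨C2, hC2, hb2⟩ := qPoch_inv_bdd hQ (Q_pow_ne hQ)
  obtain ⟨C3, hC3, hb3⟩ := qPoch_inv_bdd hQ hc
  set f : ℕ → ℂ := fun j : ℕ => (-1) ^ j * Q ^ (j.choose 2) *
      (∏ l ∈ Finset.range j, (z - c * Q ^ l)) / (qPoch Q Q j * qPoch c Q j) with hf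
  have hbd : ∀ j, ‖f j‖ ≤ C2 * C3 * ((‖z‖ + ‖c‖) ^ j * ‖Q‖ ^ (j.choose 2)) := by
    intro j
    have h1 : ‖∏ l ∈ Finset.range j, (z - c * Q ^ l)‖ ≤ (‖z‖ + ‖c‖) ^ j := by
      rw [norm_prod]
      refine (Finset.prod_le_prod (fun _ _ => norm_nonneg _) (fun l _ => ?_)).trans
        (b := ∏ l ∈ Finset.range j, (‖z‖ + ‖c‖)) (by simp)
      refine (norm_sub_le _ _).trans ?_
      rw [norm_mul, norm_pow]
      have : ‖Q‖ ^ l ≤ 1 := pow_le_one₀ (norm_nonneg _) hQ.le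
      nlinarith [norm_nonneg c]
    have : ‖f j‖ = ‖Q‖ ^ (j.choose 2) * ‖∏ l ∈ Finset.range j, (z - c * Q ^ l)‖ *
        (‖(qPoch Q Q j)⁻¹‖ * ‖(qPoch c Q j)⁻¹‖) := by
      simp only [hf, norm_div, norm_mul, norm_pow, norm_neg, norm_one, one_pow, one_mul, norm_inv]
      field_simp
    rw [this]
    calc _ ≤ ‖Q‖ ^ (j.choose 2) * (‖z‖ + ‖c‖) ^ j * (C2 * C3) := by
          gcongr
          · exact hb2 j
          · exact hb3 j
      _ = _ := by ring
  have hS := (hsum (‖z‖ + ‖c‖) (by positivity)).mul_left (C2 * C3)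
  have hfs : Summable f := Summable.of_norm_bounded hS hbd
  set g : ℕ → ℕ → ℂ := fun M j => if j ≤ M then
    f j * (qPoch Q Q M * (qPoch Q Q (M - j))⁻¹) else 0 with hg
  have hlim := tendsto_tsum_of_dominated_convergence (𝓕 := atTop) (f := g) (g := f)
    (bound := fun j => C2 * C3 * ((‖z‖ + ‖c‖) ^ j * ‖Q‖ ^ (j.choose 2)) * (C1 * C2))
    (hS.mul_right _) ?_ ?_
  · have h2 : ∀ M, ∑' j, g M j = qPoch z Q M / qPoch c Q M := by
      intro M
      rw [tsum_eq_sum (s := Finset.range (M + 1))]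
      · have := vandDiv hQ hc z M
        have n1 := qPoch_QQ_ne hQ M
        rw [div_mul_eq_div_div_swap, eq_div_iff n1] at this
        rw [← this, Finset.sum_mul]
        refine Finset.sum_congr rfl fun j hj => ?_
        rw [Finset.mem_range] at hj
        simp only [hg, hf]
        rw [if_pos (by omega)]
        field_simp
      · intro j hj
        rw [Finset.mem_range] at hj
        simp only [hg]
        rw [if_neg (by omega)]
    have h3 : Tendsto (fun M => ∑' j, g M j) atTop (𝓝 (qPochInf z Q / qPochInf c Q)) := by
      simp only [h2]
      exact (qPoch_tendsto hQ z).div (qPoch_tendsto hQ c) (qPochInf_ne_zero hQ hc)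
    rw [← tendsto_nhds_unique hlim h3]
    exact hfs.hasSum
  · intro j
    have hne := qPochInf_ne_zero hQ (Q_pow_ne hQ)
    have h1 : Tendsto (fun M => qPoch Q Q M * (qPoch Q Q (M - j))⁻¹) atTop (𝓝 1) := by
      have := (qPoch_tendsto hQ Q).mul
        (((qPoch_tendsto hQ Q).inv₀ hne).comp (tendsto_sub_atTop_nat j))
      rwa [mul_inv_cancel₀ hne] at this
    have h2 := h1.const_mul (f j)
    rw [mul_one] at h2
    refine h2.congr' ?_
    filter_upwards [eventually_ge_atTop j] with M hM
    simp only [hg]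
    rw [if_pos hM]
  · refine Eventually.of_forall fun M j => ?_
    simp only [hg]
    split_ifs
    · rw [norm_mul, norm_mul]
      gcongr
      · exact hbd j
      · exact hb1 M
      · exact hb2 _
    · rw [norm_zero]; positivity

lemma summable_choose {ρ R : ℝ} (h0 : 0 ≤ ρ) (h1 : ρ < 1) (hR : 0 ≤ R) :
    Summable fun j : ℕ => R ^ j * ρ ^ (j.choose 2) := by
  have ht : Tendsto (fun j : ℕ => R * ρ ^ j) atTop (𝓝 0) := by
    simpa using (tendsto_pow_atTop_nhds_zero_of_lt_one h0 h1).const_mul R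
  have hev : ∀ᶠ j : ℕ in atTop, R * ρ ^ j ≤ 1 / 2 := by
    filter_upwards [ht.eventually (gt_mem_nhds (show (0 : ℝ) < 1 / 2 by norm_num))] with j hj
    exact hj.le
  refine summable_of_ratio_norm_eventually_le (r := 1 / 2) (by norm_num) ?_
  filter_upwards [hev] with j hj
  have e : R ^ (j + 1) * ρ ^ ((j + 1).choose 2) = (R * ρ ^ j) * (R ^ j * ρ ^ (j.choose 2)) := by
    rw [Nat.choose_succ_succ' j 1]; simp only [Nat.choose_one_right]; ring
  rw [e, norm_mul, Real.norm_of_nonneg (by positivity : 0 ≤ R * ρ ^ j)]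
  gcongr

lemma summable_sq {ρ R : ℝ} (h0 : 0 ≤ ρ) (h1 : ρ < 1) (hR : 0 ≤ R) :
    Summable fun j : ℕ => R ^ j * ρ ^ (j ^ 2) := by
  refine Summable.of_nonneg_of_le (fun j => by positivity) (fun j => ?_) (summable_choose h0 h1 hR)
  gcongr R ^ j * ?_
  exact pow_le_pow_of_le_one h0 h1.le (by rw [two_choose j]; omega)

lemma norm_sq_lt {q : ℂ} (h1 : ‖q‖ < 1) : ‖q ^ 2‖ < 1 := by
  rw [norm_pow]; exact pow_lt_one₀ (norm_nonneg _) h1 (by norm_num)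

lemma hasSum_congr_aux {f g : ℕ → ℂ} {x y : ℂ} (h : ∀ j, g j = f j) (hx : y = x) :
    HasSum f x ↔ HasSum g y := by
  rw [hx, show g = f from funext h]

lemma gamma_sum {q a : ℂ} (h1 : ‖q‖ < 1) (ha : ∀ j : ℕ, a * q ^ 2 * (q ^ 2) ^ j ≠ 1) (r : ℕ) :
    HasSum (fun s : ℕ => a ^ s * q ^ (s ^ 2) * qPoch (-q) (q ^ 2) s * bK a (q ^ 2) s r)
      (qPoch (-q) (q ^ 2) r * a ^ r * q ^ (r ^ 2) * qPochInf (-(a * q ^ (2 * r + 1))) (q ^ 2) /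
        qPochInf (a * q ^ 2) (q ^ 2)) := by
  have hQ := norm_sq_lt h1
  have hc := shift_ne ha (2 * r)
  have key := phi_sum hQ hc (-(a * q ^ (2 * r + 1)))
    (fun R hR => summable_choose (norm_nonneg _) hQ hR)
  have hinj : Function.Injective (fun j : ℕ => r + j) := fun x y h => by simpa using h
  rw [← hinj.hasSum_iff]
  · have k2 := key.mul_left (qPoch (-q) (q ^ 2) r * a ^ r * q ^ (r ^ 2) /
      qPoch (a * q ^ 2) (q ^ 2) (2 * r))
    refine (hasSum_congr_aux ?_ ?_).1 k2
    · intro j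
      simp only [Function.comp]
      rw [bK_add, qPoch_add (-q)]
      have e1 : ∏ l ∈ Finset.range j, (-(a * q ^ (2 * r + 1)) -
          a * (q ^ 2) ^ (2 * r + 1) * (q ^ 2) ^ l) =
          (-1) ^ j * (a * q ^ (2 * r + 1)) ^ j * qPoch (-q * (q ^ 2) ^ r) (q ^ 2) j := by
        rw [qPoch, ← mul_pow, ← Finset.card_range j, ← Finset.prod_const, Finset.card_range,
          ← Finset.prod_mul_distrib]
        refine Finset.prod_congr rfl fun l _ => ?_
        ring
      rw [e1]
      have e2 : a ^ (r + j) * q ^ ((r + j) ^ 2) = a ^ r * q ^ (r ^ 2) * ((-1) ^ j *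
          (q ^ 2) ^ (j.choose 2) * ((-1) ^ j * (a * q ^ (2 * r + 1)) ^ j)) := by
        have : (r + j) ^ 2 = r ^ 2 + 2 * r * j + (2 * j.choose 2 + j) := by rw [← two_choose]; ring
        rw [this]
        have h2 : ((-1 : ℂ)) ^ j * (-1) ^ j = 1 := by rw [← mul_pow]; simp
        rw [mul_pow]
        linear_combination (-(a ^ r * q ^ (r ^ 2) * (q ^ 2) ^ (j.choose 2) * a ^ j *
          (q ^ (2 * r + 1)) ^ j)) * h2
      rw [e2]
      generalize qPoch (q ^ 2) (q ^ 2) j = p1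
      generalize qPoch (a * q ^ 2) (q ^ 2) (2 * r) = p2
      generalize qPoch (a * (q ^ 2) ^ (2 * r + 1)) (q ^ 2) j = p3
      generalize qPoch (-q * (q ^ 2) ^ r) (q ^ 2) j = p4
      generalize (q ^ 2) ^ j.choose 2 = p5
      generalize (a * q ^ (2 * r + 1)) ^ j = p6
      ring
    · rw [qPochInf_split hQ (a * q ^ 2) (2 * r)]
      rw [show a * q ^ 2 * (q ^ 2) ^ (2 * r) = a * (q ^ 2) ^ (2 * r + 1) by ring]
      rw [div_mul_div_comm]
  · intro s hs
    have : s < r := by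
      by_contra h
      exact hs ⟨s - r, by simp; omega⟩
    rw [bK_gt _ _ this, mul_zero]

lemma swap_sum {δ : ℕ → ℂ} {f : ℕ → ℕ → ℂ} {C C' R R' ρ : ℝ} (hC : 0 ≤ C) (hC' : 0 ≤ C')
    (hR : 0 ≤ R) (hR' : 1 ≤ R')
    (h0 : 0 ≤ ρ) (h1 : ρ < 1) (hδ : ∀ s, ‖δ s‖ ≤ C * (R ^ s * ρ ^ (s ^ 2)))
    (hf : ∀ s r, ‖f s r‖ ≤ C' * R' ^ r) (hz : ∀ s r, s < r → f s r = 0) :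
    ∑' s, δ s * ∑ r ∈ Finset.range (s + 1), f s r = ∑' r, ∑' s, δ s * f s r := by
  have hsum : Summable (Function.uncurry fun s r => δ s * f s r) := by
    have hg : Summable fun r : ℕ => (1 / 2 : ℝ) ^ r :=
      summable_geometric_of_lt_one (by norm_num) (by norm_num)
    have hp := Summable.mul_of_nonneg ((summable_sq h0 h1 (R := 2 * R * R')
      (by positivity)).mul_left (C * C')) hg
      (fun s => by positivity) (fun r => by positivity)
    refine Summable.of_norm_bounded hp ?_
    rintro ⟨s, r⟩
    simp only [Function.uncurry]
    by_cases h : s < r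
    · rw [hz s r h, mul_zero, norm_zero]; positivity
    push Not at h
    obtain ⟨d, rfl⟩ := Nat.exists_eq_add_of_le h
    rw [norm_mul]
    calc ‖δ (r + d)‖ * ‖f (r + d) r‖ ≤ (C * (R ^ (r + d) * ρ ^ ((r + d) ^ 2))) * (C' * R' ^ r) := by
          gcongr
          · exact hδ _
          · exact hf _ _
      _ ≤ (C * (R ^ (r + d) * ρ ^ ((r + d) ^ 2))) * (C' * (R' ^ (r + d) * 2 ^ d)) := by
          gcongr
          calc R' ^ r ≤ R' ^ (r + d) := pow_le_pow_right₀ hR' (by omega)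
            _ ≤ R' ^ (r + d) * 2 ^ d := le_mul_of_one_le_right (by positivity)
                (one_le_pow₀ (by norm_num))
      _ = _ := by
          rw [mul_pow, mul_pow, pow_add 2 r d, one_div, inv_pow]
          field_simp
  rw [hsum.tsum_comm]
  refine tsum_congr fun s => ?_
  rw [tsum_mul_left, tsum_eq_sum (s := Finset.range (s + 1))]
  intro r hr
  exact hz s r (by simpa [Nat.lt_succ_iff] using hr)

/-- Finite nested fermionic sums. -/
noncomputable def fE (Q : ℂ) : ℕ → (ℕ → ℕ → ℂ) → ℕ → ℂ
  | 0, _, N => 1 / qPoch Q Q N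
  | n + 1, w, N => ∑ s ∈ Finset.range (N + 1), w 0 s / qPoch Q Q (N - s) *
      fE Q n (fun m => w (m + 1)) s

lemma fE_congr (Q : ℂ) (n : ℕ) : ∀ (w w' : ℕ → ℕ → ℂ) (_ : ∀ m < n, ∀ s, w m s = w' m s) (N : ℕ),
    fE Q n w N = fE Q n w' N := by
  induction n with
  | zero => intro w w' _ N; rfl
  | succ n ih =>
    intro w w' h N
    simp only [fE]
    refine Finset.sum_congr rfl fun s _ => ?_
    rw [h 0 (by omega), ih _ (fun m => w' (m + 1)) (fun m hm s => h (m + 1) (by omega) s)]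

lemma step_gen (Q : ℂ) (w1 : ℕ → ℂ) (L L' : ℕ → ℕ → ℂ) (e : ℕ → ℂ)
    (hL : ∀ N r, ∑ s ∈ Finset.range (N + 1), w1 s / qPoch Q Q (N - s) * L s r = L' N r)
    (hz : ∀ s r, s < r → L s r = 0) (N : ℕ) :
    ∑ s ∈ Finset.range (N + 1), w1 s / qPoch Q Q (N - s) *
      ∑ r ∈ Finset.range (s + 1), e r * L s r = ∑ r ∈ Finset.range (N + 1), e r * L' N r := by
  have : ∀ s ∈ Finset.range (N + 1), w1 s / qPoch Q Q (N - s) *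
      ∑ r ∈ Finset.range (s + 1), e r * L s r =
      ∑ r ∈ Finset.range (N + 1), e r * (w1 s / qPoch Q Q (N - s) * L s r) := by
    intro s hs
    rw [Finset.mem_range] at hs
    rw [Finset.sum_subset (Finset.range_mono (show s + 1 ≤ N + 1 by omega)), Finset.mul_sum]
    · refine Finset.sum_congr rfl fun r _ => ?_
      ring
    · intro r _ hr
      rw [hz s r (by simpa [Nat.lt_succ_iff] using hr), mul_zero]
  rw [Finset.sum_congr rfl this, Finset.sum_comm]
  refine Finset.sum_congr rfl fun r _ => ?_
  rw [← Finset.mul_sum, hL]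

lemma shift_ne' {a Q : ℂ} (ha : ∀ j : ℕ, a * Q * Q ^ j ≠ 1) (j : ℕ) : a * Q * Q * Q ^ j ≠ 1 := by
  have := ha (j + 1)
  rwa [show a * Q * Q ^ (j + 1) = a * Q * Q * Q ^ j by ring] at this

lemma G1 {a Q : ℂ} (hQ : ‖Q‖ < 1) (ha : ∀ j : ℕ, a * Q * Q ^ j ≠ 1) (n : ℕ) : ∀ N,
    fE Q n (fun _ s => (a * Q) ^ s * Q ^ (s ^ 2)) N =
    ∑ r ∈ Finset.range (N + 1), (uc a Q r * ((a * Q) ^ r * Q ^ (r ^ 2)) ^ (n + 1) *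
      (1 - a * Q ^ (2 * r + 1)) / (1 - a * Q)) * bK (a * Q) Q N r := by
  have hb := bailey_step hQ (shift_ne' ha)
  induction n with
  | zero =>
    intro N
    have h := step_gen Q (fun s => (a * Q) ^ s * Q ^ (s ^ 2)) (bK (a * Q) Q)
      (fun N r => (a * Q) ^ r * Q ^ (r ^ 2) * bK (a * Q) Q N r)
      (fun r => uc a Q r * (1 - a * Q ^ (2 * r + 1)) / (1 - a * Q)) hb
      (fun s r h => bK_gt _ _ h) N
    have hu : ∀ s, ∑ r ∈ Finset.range (s + 1), uc a Q r * (1 - a * Q ^ (2 * r + 1)) / (1 - a * Q) *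
      bK (a * Q) Q s r = if s = 0 then 1 else 0 := by
      intro s
      rw [← unit_pair hQ ha s]
      refine Finset.sum_congr rfl fun r _ => ?_
      ring
    simp only [hu] at h
    simp only [mul_ite, mul_one, mul_zero, Finset.sum_ite_eq', Finset.mem_range] at h
    rw [if_pos (by omega)] at h
    simp only [fE]
    simp only [pow_zero, one_mul, Nat.sub_zero, ne_eq, OfNat.ofNat_ne_zero, not_false_eq_true,
      zero_pow] at h
    rw [h]
    refine Finset.sum_congr rfl fun r _ => ?_
    ring
  | succ n ih =>
    intro N
    simp only [fE, ih]
    rw [step_gen Q (fun s => (a * Q) ^ s * Q ^ (s ^ 2)) _ _ _ hb (fun s r h => bK_gt _ _ h)]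
    refine Finset.sum_congr rfl fun r _ => ?_
    ring

/-- The combination of kernels appearing after the change of parameter. -/
noncomputable def bL (a Q : ℂ) (p N r : ℕ) : ℂ :=
  (a ^ r * Q ^ (r ^ 2)) ^ p * bK a Q N r -
    a * Q ^ (2 * r + 1) * (a ^ (r + 1) * Q ^ ((r + 1) ^ 2)) ^ p * bK a Q N (r + 1)

lemma bL_gt (a Q : ℂ) (p : ℕ) {s r : ℕ} (h : s < r) : bL a Q p s r = 0 := by
  rw [bL, bK_gt _ _ h, bK_gt _ _ (by omega)]; simp

lemma bL_zero {a Q : ℂ} (hQ : ‖Q‖ < 1) (ha : ∀ j : ℕ, a * Q * Q ^ j ≠ 1) {N r : ℕ} (h : r ≤ N) :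
    bL a Q 0 N r = (1 - a * Q ^ (2 * r + 1)) / (1 - a * Q) * bK (a * Q) Q N r := by
  have := bK_shift ha h
  rw [div_mul_eq_mul_div, mul_div_assoc, this, bL]
  obtain ⟨d, rfl⟩ := Nat.exists_eq_add_of_le h
  have e2 := qPoch_succ (a * Q) Q (r + d + r)
  have n2 := qPoch_ne_zero ha (r + d + r + 1)
  rw [e2] at n2
  have m1 := left_ne_zero_of_mul n2
  have m2 := right_ne_zero_of_mul n2
  rw [show r + d - r = d by omega, e2, bK, if_pos (by omega), show r + d - r = d by omega]
  obtain ⟨w, hw⟩ : ∃ w, w = 1 - a * Q * Q ^ (r + d + r) := ⟨_, rfl⟩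
  rcases d with _ | d
  · rw [bK_gt _ _ (by omega), ← hw, qPoch_zero]
    rw [← hw] at m2
    field_simp
    rw [hw]; ring
  · rw [bK, if_pos (by omega), show r + (d + 1) - (r + 1) = d by omega,
      show r + (d + 1) + (r + 1) = r + (d + 1) + r + 1 by ring, e2, ← hw]
    rw [← hw] at m2
    have n4 := qPoch_QQ_ne hQ (d + 1)
    have e4 := qPoch_succ Q Q d
    rw [e4] at n4 ⊢
    have m3 := left_ne_zero_of_mul n4
    have m4 := right_ne_zero_of_mul n4
    obtain ⟨v, hv⟩ : ∃ v, v = 1 - Q * Q ^ d := ⟨_, rfl⟩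
    rw [← hv] at m4 ⊢
    field_simp
    rw [hw, hv]; ring

lemma G2 {a Q : ℂ} (hQ : ‖Q‖ < 1) (ha : ∀ j : ℕ, a * Q * Q ^ j ≠ 1) (d p : ℕ) : ∀ N,
    fE Q (p + d) (fun m s => (if m < p then a ^ s else (a * Q) ^ s) * Q ^ (s ^ 2)) N =
    ∑ r ∈ Finset.range (N + 1), (uc a Q r * ((a * Q) ^ r * Q ^ (r ^ 2)) ^ (d + 1)) *
      bL a Q p N r := by
  induction p with
  | zero =>
    intro N
    simp only [zero_add, not_lt_zero, if_false]
    rw [G1 hQ ha]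
    refine Finset.sum_congr rfl fun r hr => ?_
    rw [bL_zero hQ ha (by simpa [Nat.lt_succ_iff] using hr)]
    ring
  | succ p ih =>
    intro N
    rw [show p + 1 + d = p + d + 1 by ring]
    simp only [fE, Nat.add_lt_add_iff_right, ih, Nat.zero_lt_succ, if_true]
    rw [step_gen Q (fun s => a ^ s * Q ^ (s ^ 2)) (bL a Q p) (bL a Q (p + 1)) _ ?_
      (fun s r h => bL_gt _ _ _ h)]
    intro N r
    have h1 := bailey_step hQ ha N r
    have h2 := bailey_step hQ ha N (r + 1)
    simp only [bL, mul_sub, Finset.sum_sub_distrib]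
    have e : ∀ (x : ℂ) (r : ℕ), ∑ s ∈ Finset.range (N + 1), a ^ s * Q ^ (s ^ 2) / qPoch Q Q (N - s) *
       (x * bK a Q s r) = x * ∑ s ∈ Finset.range (N + 1), a ^ s * Q ^ (s ^ 2) / qPoch Q Q (N - s) *
       bK a Q s r := by
      intro x r
      rw [Finset.mul_sum]
      refine Finset.sum_congr rfl fun s _ => ?_
      ring
    rw [e, e, h1, h2]
    ring

/-- Terms of the nested sums, indexed by all tuples (zero unless weakly decreasing). -/
noncomputable def fT (Q : ℂ) : (n : ℕ) → (ℕ → ℕ → ℂ) → ℕ → (Fin n → ℕ) → ℂ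
  | 0, _, N, _ => 1 / qPoch Q Q N
  | n + 1, w, N, s => (if s 0 ≤ N then w 0 (s 0) / qPoch Q Q (N - s 0) else 0) *
      fT Q n (fun m => w (m + 1)) (s 0) (Fin.tail s)

lemma fT_bound {Q : ℂ} {C : ℝ} (hC : 1 ≤ C) (hb : ∀ n, ‖(qPoch Q Q n)⁻¹‖ ≤ C) (n : ℕ) :
    ∀ (w : ℕ → ℕ → ℂ) (N : ℕ) (s : Fin n → ℕ),
      ‖fT Q n w N s‖ ≤ C ^ (n + 1) * ∏ m : Fin n, ‖w m (s m)‖ := by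
  induction n with
  | zero => intro w N s; simpa [fT] using hb N
  | succ n ih =>
    intro w N s
    rw [fT, Fin.prod_univ_succ, norm_mul]
    have h1 : ‖(if s 0 ≤ N then w 0 (s 0) / qPoch Q Q (N - s 0) else 0)‖ ≤ ‖w 0 (s 0)‖ * C := by
      split_ifs
      · rw [div_eq_mul_inv, norm_mul]; gcongr; exact hb _
      · rw [norm_zero]; positivity
    calc _ ≤ (‖w 0 (s 0)‖ * C) * (C ^ (n + 1) * ∏ m : Fin n, ‖w (m + 1) (Fin.tail s m)‖) :=
          mul_le_mul h1 (ih _ _ _) (norm_nonneg _) (by positivity)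
      _ = _ := by
          simp only [Fin.tail, Fin.val_succ, Fin.val_zero]
          ring

lemma summable_pi (n : ℕ) : ∀ (u : ℕ → ℕ → ℝ) (_ : ∀ m s, 0 ≤ u m s) (_ : ∀ m, Summable (u m)),
    Summable fun s : Fin n → ℕ => ∏ m : Fin n, u m (s m) := by
  induction n with
  | zero => intro u _ _; exact Summable.of_finite
  | succ n ih =>
    intro u h0 hs
    rw [← (Fin.consEquiv (fun _ : Fin (n + 1) => ℕ)).summable_iff]
    have := Summable.mul_of_nonneg (hs 0) (ih (fun m => u (m + 1)) (fun m s => h0 _ _)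
      (fun m => hs _)) (fun s => h0 _ _) (fun s => Finset.prod_nonneg fun m _ => h0 _ _)
    refine this.congr ?_
    rintro ⟨x, t⟩
    simp [Fin.consEquiv, Fin.prod_univ_succ]

lemma fT_summable {Q : ℂ} (hQ : ‖Q‖ < 1) (n : ℕ) (w : ℕ → ℕ → ℂ)
    (hw : ∀ m, Summable fun s => ‖w m s‖) (N : ℕ) : Summable (fT Q n w N) := by
  obtain ⟨C, hC, hb⟩ := qPoch_inv_bdd hQ (Q_pow_ne hQ)
  exact Summable.of_norm_bounded ((summable_pi n (fun m s => ‖w m s‖)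
    (fun _ _ => norm_nonneg _) hw).mul_left _) (fT_bound hC hb n w N)

lemma fT_tsum {Q : ℂ} (hQ : ‖Q‖ < 1) (n : ℕ) : ∀ (w : ℕ → ℕ → ℂ)
    (_ : ∀ m, Summable fun s => ‖w m s‖) (N : ℕ), ∑' s, fT Q n w N s = fE Q n w N := by
  induction n with
  | zero =>
    intro w _ N
    rw [tsum_fintype]
    simp [fT, fE]
  | succ n ih =>
    intro w hw N
    have hs := fT_summable hQ (n + 1) w hw N
    rw [← (Fin.consEquiv (fun _ : Fin (n + 1) => ℕ)).summable_iff] at hs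
    rw [← (Fin.consEquiv (fun _ : Fin (n + 1) => ℕ)).tsum_eq]
    refine (Summable.tsum_prod hs).trans ?_
    simp only [Function.comp, Fin.consEquiv, Equiv.coe_fn_mk, fT, Fin.cons_zero, Fin.tail_cons]
    simp only [tsum_mul_left, ih (fun m => w (m + 1)) (fun m => hw (m + 1))]
    rw [tsum_eq_sum (s := Finset.range (N + 1)), fE]
    · refine Finset.sum_congr rfl fun s hs => ?_
      rw [if_pos (by simpa [Nat.lt_succ_iff] using hs)]
    · intro s hs
      rw [if_neg (by simpa [Nat.lt_succ_iff] using hs), zero_mul]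

/-- Extension of a tuple by zero. -/
def ext0 {n : ℕ} (s : Fin n → ℕ) : ℕ → ℕ := fun m => if h : m < n then s ⟨m, h⟩ else 0

lemma ext0_succ {n : ℕ} (s : Fin (n + 1) → ℕ) (m : ℕ) : ext0 s (m + 1) = ext0 (Fin.tail s) m := by
  simp only [ext0, Nat.add_lt_add_iff_right]
  rfl

lemma ext0_zero {n : ℕ} (s : Fin (n + 1) → ℕ) : ext0 s 0 = s 0 := by
  simp [ext0]

lemma antitone_cons {n : ℕ} (s : Fin (n + 1) → ℕ) :
    Antitone s ↔ (Antitone (Fin.tail s) ∧ ∀ j, Fin.tail s j ≤ s 0) := by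
  constructor
  · intro h
    exact ⟨fun i j hij => h (Fin.succ_le_succ_iff.2 hij), fun j => h (Fin.zero_le _)⟩
  · rintro ⟨h1, h2⟩ i j hij
    induction i using Fin.cases with
    | zero =>
      induction j using Fin.cases with
      | zero => exact le_rfl
      | succ j => exact h2 j
    | succ i =>
      induction j using Fin.cases with
      | zero => exact absurd hij (by simp)
      | succ j => exact h1 (Fin.succ_le_succ_iff.1 hij)

lemma fT_eq (Q : ℂ) (n : ℕ) : ∀ (w : ℕ → ℕ → ℂ) (N : ℕ) (s : Fin n → ℕ),
    (Antitone s ∧ ∀ j, s j ≤ N) → fT Q n w N s =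
      (∏ m ∈ Finset.range n, w m (ext0 s m)) / (qPoch Q Q (N - ext0 s 0) *
        ∏ m ∈ Finset.range n, qPoch Q Q (ext0 s m - ext0 s (m + 1))) := by
  induction n with
  | zero => intro w N s _; simp [fT, ext0]
  | succ n ih =>
    rintro w N s ⟨h1, h2⟩
    rw [fT, if_pos (h2 0), ih _ _ _ ((antitone_cons s).1 h1), Finset.prod_range_succ',
      Finset.prod_range_succ']
    simp only [ext0_succ, ext0_zero]
    rw [div_mul_div_comm]
    congr 1
    · ring
    · ring

lemma fT_eq_zero (Q : ℂ) (n : ℕ) : ∀ (w : ℕ → ℕ → ℂ) (N : ℕ) (s : Fin n → ℕ),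
    ¬ (Antitone s ∧ ∀ j, s j ≤ N) → fT Q n w N s = 0 := by
  induction n with
  | zero =>
    intro w N s h
    exact absurd ⟨fun i => i.elim0, fun j => j.elim0⟩ h
  | succ n ih =>
    rintro w N s h
    rw [fT]
    by_cases h0 : s 0 ≤ N
    · rw [ih, mul_zero]
      intro h3
      exact h ⟨(antitone_cons s).2 h3, fun j => ((antitone_cons s).2 h3 (Fin.zero_le j)).trans h0⟩
    · rw [if_neg h0, zero_mul]

lemma multi_sum {Q : ℂ} (hQ : ‖Q‖ < 1) (n : ℕ) (w : ℕ → ℕ → ℂ)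
    (hw : ∀ m, Summable fun s => ‖w m s‖) :
    ∑' s : {s : Fin (n + 1) → ℕ // Antitone s}, (∏ m ∈ Finset.range (n + 1), w m (ext0 s.1 m)) /
        ∏ m ∈ Finset.range (n + 1), qPoch Q Q (ext0 s.1 m - ext0 s.1 (m + 1)) =
      ∑' s, w 0 s * fE Q n (fun m => w (m + 1)) s := by
  obtain ⟨C, hC, hb⟩ := qPoch_inv_bdd hQ (Q_pow_ne hQ)
  set g : (Fin (n + 1) → ℕ) → ℂ := fun s => w 0 (s 0) *
    fT Q n (fun m => w (m + 1)) (s 0) (Fin.tail s) with hg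
  have hgs : Summable g := by
    refine Summable.of_norm_bounded ((summable_pi (n + 1) (fun m s => ‖w m s‖)
      (fun _ _ => norm_nonneg _) hw).mul_left (C ^ (n + 1))) fun s => ?_
    rw [hg, norm_mul, Fin.prod_univ_succ]
    have := fT_bound hC hb n (fun m => w (m + 1)) (s 0) (Fin.tail s)
    calc _ ≤ ‖w 0 (s 0)‖ * (C ^ (n + 1) * ∏ m : Fin n, ‖w (m + 1) (Fin.tail s m)‖) := by gcongr
      _ = _ := by
          simp only [Fin.tail, Fin.val_succ, Fin.val_zero]
          ring
  have h1 : ∑' s : {s : Fin (n + 1) → ℕ // Antitone s},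
      (∏ m ∈ Finset.range (n + 1), w m (ext0 s.1 m)) /
        ∏ m ∈ Finset.range (n + 1), qPoch Q Q (ext0 s.1 m - ext0 s.1 (m + 1)) = ∑' s, g s := by
    have h2 : ∑' s : {s : Fin (n + 1) → ℕ // Antitone s}, g s.1 = ∑' s, g s := by
      refine tsum_subtype_eq_of_support_subset (s := {s | Antitone s}) ?_
      intro s hs
      by_contra h
      apply hs
      simp only [hg]
      rw [fT_eq_zero, mul_zero]
      intro h3
      exact h ((antitone_cons s).2 h3)
    rw [← h2]
    refine tsum_congr fun s => ?_
    simp only [hg]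
    rw [fT_eq _ _ _ _ _ ((antitone_cons s.1).1 s.2), Finset.prod_range_succ',
      Finset.prod_range_succ']
    simp only [ext0_succ, ext0_zero]
    rw [mul_div_assoc']
    congr 1
    · ring
    · ring
  rw [h1]
  have hs := hgs
  rw [← (Fin.consEquiv (fun _ : Fin (n + 1) => ℕ)).summable_iff] at hs
  rw [← (Fin.consEquiv (fun _ : Fin (n + 1) => ℕ)).tsum_eq]
  refine (Summable.tsum_prod hs).trans ?_
  simp only [hg, Function.comp, Fin.consEquiv, Equiv.coe_fn_mk, Fin.cons_zero, Fin.tail_cons]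
  simp only [tsum_mul_left, fT_tsum hQ n (fun m => w (m + 1)) (fun m => hw (m + 1))]

/-- The q-binomial theorem in the form needed to sum over the even-indexed variables. -/
lemma qbin {q : ℂ} (h1 : ‖q‖ < 1) (M t : ℕ) :
    ∑ j ∈ Finset.range (M + 1), q ^ ((t + j) ^ 2) /
      (qPoch (q ^ 2) (q ^ 2) (M - j) * qPoch (q ^ 2) (q ^ 2) j) =
      q ^ (t ^ 2) * qPoch (-q * (q ^ 2) ^ t) (q ^ 2) M / qPoch (q ^ 2) (q ^ 2) M := by
  have hQ := norm_sq_lt h1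
  have key := vandDiv hQ (c := 0) (by simp) (-q * (q ^ 2) ^ t) M
  have hz : ∀ M, qPoch 0 (q ^ 2) M = 1 := by intro M; simp [qPoch]
  simp only [hz, mul_one, zero_mul, sub_zero, Finset.prod_const, Finset.card_range] at key
  rw [mul_div_assoc, ← key, Finset.mul_sum]
  refine Finset.sum_congr rfl fun j _ => ?_
  rw [mul_div_assoc']
  congr 1
  have : (t + j) ^ 2 = t ^ 2 + 2 * t * j + (2 * j.choose 2 + j) := by rw [← two_choose]; ring
  rw [this]
  have h2 : ((-1 : ℂ)) ^ j * (-1) ^ j = 1 := by rw [← mul_pow]; simp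
  rw [show -q * (q ^ 2) ^ t = (-1) * (q * (q ^ 2) ^ t) by ring, mul_pow (-1)]
  linear_combination (-(q ^ (t ^ 2) * (q ^ 2) ^ (j.choose 2) * (q * (q ^ 2) ^ t) ^ j)) * h2

lemma fE_succ (Q : ℂ) (n : ℕ) (w : ℕ → ℕ → ℂ) (N : ℕ) : fE Q (n + 1) w N =
    ∑ s ∈ Finset.range (N + 1), w 0 s / qPoch Q Q (N - s) * fE Q n (fun m => w (m + 1)) s := rfl

lemma two_three {q : ℂ} (h1 : ‖q‖ < 1) (n : ℕ) :
    ∀ (w v : ℕ → ℕ → ℂ) (_ : ∀ m s, v (2 * m) s = q ^ (s ^ 2))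
      (_ : ∀ m s, w m s = v (2 * m + 1) s * q ^ (s ^ 2)) (N : ℕ),
      fE (q ^ 2) (2 * n + 1) v N = qPoch (-q) (q ^ 2) N * fE (q ^ 2) n w N := by
  have hQ := norm_sq_lt h1
  induction n with
  | zero =>
    intro w v hv hw N
    have := qbin h1 N 0
    simp only [zero_add, pow_zero, mul_one, ne_eq, OfNat.ofNat_ne_zero, not_false_eq_true,
      zero_pow, one_mul] at this
    simp only [fE]
    have h0 : ∀ s, v 0 s = q ^ (s ^ 2) := by simpa using hv 0
    rw [mul_one_div, ← this]
    refine Finset.sum_congr rfl fun s _ => ?_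
    rw [h0]; field_simp
  | succ n ih =>
    intro w v hv hw N
    rw [show 2 * (n + 1) + 1 = (2 * n + 1) + 1 + 1 by ring]
    rw [fE_succ (q ^ 2) (2 * n + 1 + 1), fE_succ (q ^ 2) n]
    simp only [fE_succ (q ^ 2) (2 * n + 1)]
    have ih' := ih (fun m => w (m + 1)) (fun m => v (m + 1 + 1))
      (fun m s => by rw [← hv (m + 1) s]; rfl) (fun m s => by rw [hw (m + 1) s]; rfl)
    simp only [ih']
    have h0 : ∀ s, v 0 s = q ^ (s ^ 2) := by simpa using hv 0
    have h0' : ∀ s, w 0 s = v 1 s * q ^ (s ^ 2) := by simpa using hw 0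
    simp only [zero_add, h0, h0', Finset.mul_sum]
    have e : ∀ s ∈ Finset.range (N + 1), ∀ F : ℕ → ℂ,
        ∑ t ∈ Finset.range (s + 1), F t = ∑ t ∈ Finset.range (N + 1), if t ≤ s then F t else 0 := by
      intro s hs F
      rw [Finset.mem_range] at hs
      rw [← Finset.sum_filter]
      congr 1
      ext t
      simp only [Finset.mem_range, Finset.mem_filter]
      omega
    rw [Finset.sum_congr rfl fun s hs => e s hs _, Finset.sum_comm]
    refine Finset.sum_congr rfl fun t ht => ?_
    have ht' : t ≤ N := by simpa [Nat.lt_succ_iff] using ht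
    obtain ⟨M, rfl⟩ := Nat.exists_eq_add_of_le ht'
    rw [add_assoc, Finset.sum_range_add, Finset.sum_eq_zero, zero_add]
    swap
    · intro s hs
      rw [Finset.mem_range] at hs
      rw [if_neg (by omega)]
    have key := qbin h1 M t
    have h5 := qPoch_add (-q) (q ^ 2) t M
    rw [show t + M - t = M by omega, h5]
    have e6 : qPoch (-q) (q ^ 2) t * qPoch (-q * (q ^ 2) ^ t) (q ^ 2) M *
        (v 1 t * q ^ (t ^ 2) / qPoch (q ^ 2) (q ^ 2) M * fE (q ^ 2) n (fun m => w (m + 1)) t) =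
        (qPoch (-q) (q ^ 2) t * v 1 t * fE (q ^ 2) n (fun m => w (m + 1)) t) *
        (q ^ (t ^ 2) * qPoch (-q * (q ^ 2) ^ t) (q ^ 2) M / qPoch (q ^ 2) (q ^ 2) M) := by ring
    rw [e6, ← key, Finset.mul_sum]
    refine Finset.sum_congr rfl fun j _ => ?_
    rw [if_pos (by omega), show t + M - (t + j) = M - j by omega, show t + j - t = j by omega]
    field_simp

lemma multi_sum' {Q : ℂ} (hQ : ‖Q‖ < 1) (n n' : ℕ) (hn : n' = n + 1) (w : ℕ → ℕ → ℂ)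
    (hw : ∀ m, Summable fun s => ‖w m s‖) :
    ∑' s : {s : Fin n' → ℕ // Antitone s}, (∏ m ∈ Finset.range n', w m (ext0 s.1 m)) /
        ∏ m ∈ Finset.range n', qPoch Q Q (ext0 s.1 m - ext0 s.1 (m + 1)) =
      ∑' s, w 0 s * fE Q n (fun m => w (m + 1)) s := by
  subst hn; exact multi_sum hQ n w hw

/-- Weights of the second sum. -/
noncomputable def w2 (q a : ℂ) (i m s : ℕ) : ℂ :=
  a ^ s * (if i - 1 ≤ m then q ^ (2 * s) else 1) *
    (if m = 0 then qPoch (-q) (q ^ 2) s * q ^ (s ^ 2) else q ^ (2 * s ^ 2))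

/-- Weights of the third sum. -/
noncomputable def w3 (q a : ℂ) (i m s : ℕ) : ℂ :=
  (if m % 2 = 0 then a ^ s * (if i - 1 ≤ m / 2 then q ^ (2 * s) else 1) else 1) * q ^ (s ^ 2)

lemma prod_ite_Ico (f : ℕ → ℂ) (j n : ℕ) :
    ∏ m ∈ Finset.range n, (if j ≤ m then f m else 1) = ∏ m ∈ Finset.Ico j n, f m := by
  rw [← Finset.prod_filter]
  congr 1
  ext m
  simp only [Finset.mem_filter, Finset.mem_range, Finset.mem_Ico]
  omega

lemma prod_pow_sum (x : ℂ) (S : Finset ℕ) (t : ℕ → ℕ) (c : ℕ) :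
    ∏ m ∈ S, x ^ (c * t m) = x ^ (c * ∑ m ∈ S, t m) := by
  rw [Finset.prod_pow_eq_pow_sum, Finset.mul_sum]

lemma term2 (q a : ℂ) (i n : ℕ) (hn : 1 ≤ n) (t : ℕ → ℕ) :
    a ^ (∑ m ∈ Finset.range n, t m) * qPoch (-q) (q ^ 2) (t 0) *
      q ^ ((t 0) ^ 2 + 2 * ∑ m ∈ Finset.Ico 1 n, (t m) ^ 2 +
        2 * ∑ m ∈ Finset.Ico (i - 1) n, t m) = ∏ m ∈ Finset.range n, w2 q a i m (t m) := by
  simp only [w2, Finset.prod_mul_distrib, Finset.prod_pow_eq_pow_sum]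
  rw [prod_ite_Ico (fun m => q ^ (2 * t m)), prod_pow_sum]
  obtain ⟨K, rfl⟩ : ∃ K, n = K + 1 := ⟨n - 1, by omega⟩
  rw [Finset.prod_range_succ']
  simp only [Nat.add_eq_zero_iff, one_ne_zero, and_false, if_false, if_true]
  rw [prod_pow_sum q _ (fun m => t (m + 1) ^ 2), Finset.sum_Ico_eq_sum_range (fun m => t m ^ 2)]
  simp only [add_comm 1, Nat.add_sub_cancel]
  rw [pow_add, pow_add]
  ring

lemma prod_even_odd (f : ℕ → ℂ) (n : ℕ) :
    ∏ m ∈ Finset.range (2 * n), f m =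
      (∏ m ∈ Finset.range n, f (2 * m)) * ∏ m ∈ Finset.range n, f (2 * m + 1) := by
  induction n with
  | zero => simp
  | succ n ih =>
    rw [show 2 * (n + 1) = 2 * n + 1 + 1 by ring, Finset.prod_range_succ, Finset.prod_range_succ,
      ih, Finset.prod_range_succ, Finset.prod_range_succ]
    ring

lemma term3 (q a : ℂ) (i n : ℕ) (t : ℕ → ℕ) :
    a ^ (∑ m ∈ Finset.range n, t (2 * m)) *
      q ^ (∑ m ∈ Finset.range (2 * n), (t m) ^ 2 +
        2 * ∑ m ∈ Finset.Ico (i - 1) n, t (2 * m)) =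
      ∏ m ∈ Finset.range (2 * n), w3 q a i m (t m) := by
  simp only [w3]
  rw [Finset.prod_mul_distrib, prod_even_odd]
  have h1 : ∀ m, (2 * m) % 2 = 0 := by intro m; omega
  have h2 : ∀ m, (2 * m) / 2 = m := by intro m; omega
  have h3 : ∀ m, ¬ ((2 * m + 1) % 2 = 0) := by intro m; omega
  simp only [h1, h2, h3, if_true, if_false, Finset.prod_const_one, mul_one]
  rw [Finset.prod_mul_distrib, prod_ite_Ico (fun m => q ^ (2 * t (2 * m))),
    prod_pow_sum q _ (fun m => t (2 * m)), Finset.prod_pow_eq_pow_sum, Finset.prod_pow_eq_pow_sum,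
    pow_add]
  ring

lemma ite_norm_le {q : ℂ} (h1 : ‖q‖ < 1) (P : Prop) [Decidable P] (n : ℕ) :
    ‖(if P then q ^ n else 1)‖ ≤ 1 := by
  split_ifs
  · rw [norm_pow]; exact pow_le_one₀ (norm_nonneg _) h1.le
  · simp

lemma w2_bound {q : ℂ} (h1 : ‖q‖ < 1) (a : ℂ) (i : ℕ) : ∃ C : ℝ, 0 ≤ C ∧
    ∀ m s, ‖w2 q a i m s‖ ≤ C * ((1 + ‖a‖) ^ s * ‖q‖ ^ (s ^ 2)) := by
  obtain ⟨C, hC, hb⟩ := qPoch_bdd (norm_sq_lt h1) (-q)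
  refine ⟨C, by linarith, fun m s => ?_⟩
  rw [w2, norm_mul, norm_mul, norm_pow]
  have e1 := ite_norm_le h1 (i - 1 ≤ m) (2 * s)
  have e2 : ‖(if m = 0 then qPoch (-q) (q ^ 2) s * q ^ (s ^ 2) else q ^ (2 * s ^ 2))‖ ≤
      C * ‖q‖ ^ (s ^ 2) := by
    split_ifs
    · rw [norm_mul, norm_pow]; gcongr; exact hb s
    · rw [norm_pow]
      have : ‖q‖ ^ (2 * s ^ 2) ≤ ‖q‖ ^ (s ^ 2) :=
        pow_le_pow_of_le_one (norm_nonneg _) h1.le (by omega)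
      have h3 : 0 ≤ ‖q‖ ^ (s ^ 2) := by positivity
      nlinarith
  calc _ ≤ (1 + ‖a‖) ^ s * 1 * (C * ‖q‖ ^ (s ^ 2)) := by
        gcongr
        linarith
    _ = _ := by ring

lemma w3_bound {q : ℂ} (h1 : ‖q‖ < 1) (a : ℂ) (i : ℕ) (m s : ℕ) :
    ‖w3 q a i m s‖ ≤ 1 * ((1 + ‖a‖) ^ s * ‖q‖ ^ (s ^ 2)) := by
  rw [w3, norm_mul, norm_pow, one_mul]
  gcongr
  split_ifs with h h'
  · rw [norm_mul, norm_pow, norm_pow]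
    have : ‖q‖ ^ (2 * s) ≤ 1 := pow_le_one₀ (norm_nonneg _) h1.le
    have h2 : ‖a‖ ^ s ≤ (1 + ‖a‖) ^ s := by gcongr; linarith
    have h3 : 0 ≤ ‖a‖ ^ s := by positivity
    nlinarith
  · rw [mul_one, norm_pow]; gcongr; linarith
  · rw [norm_one]; exact one_le_pow₀ (by linarith [norm_nonneg a])

lemma bound_summable {q : ℂ} (h1 : ‖q‖ < 1) {f : ℕ → ℂ} {C R : ℝ} (hR : 0 ≤ R)
    (hf : ∀ s, ‖f s‖ ≤ C * (R ^ s * ‖q‖ ^ (s ^ 2))) : Summable fun s => ‖f s‖ :=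
  Summable.of_nonneg_of_le (fun _ => norm_nonneg _) hf
    ((summable_sq (norm_nonneg _) h1 hR).mul_left C)

lemma bK_bound {a Q : ℂ} (hQ : ‖Q‖ < 1) (ha : ∀ j : ℕ, a * Q * Q ^ j ≠ 1) :
    ∃ C : ℝ, 0 ≤ C ∧ ∀ s r, ‖bK a Q s r‖ ≤ C := by
  obtain ⟨C1, hC1, hb1⟩ := qPoch_inv_bdd hQ (Q_pow_ne hQ)
  obtain ⟨C2, hC2, hb2⟩ := qPoch_inv_bdd hQ ha
  refine ⟨C1 * C2, by positivity, fun s r => ?_⟩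
  rw [bK]
  split_ifs
  · rw [one_div, mul_inv, norm_mul]
    gcongr
    · exact hb1 _
    · exact hb2 _
  · rw [norm_zero]; positivity

lemma uc_bound {a Q : ℂ} (hQ : ‖Q‖ < 1) : ∃ C : ℝ, 0 ≤ C ∧ ∀ r, ‖uc a Q r‖ ≤ C := by
  obtain ⟨C1, hC1, hb1⟩ := qPoch_inv_bdd hQ (Q_pow_ne hQ)
  obtain ⟨C2, hC2, hb2⟩ := qPoch_bdd hQ (a * Q)
  refine ⟨C2 * C1, by positivity, fun r => ?_⟩
  rw [uc, div_eq_mul_inv, norm_mul, norm_mul, norm_mul]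
  have h1 : ‖(-1 : ℂ) ^ r‖ = 1 := by simp
  have h2 : ‖Q ^ (r.choose 2)‖ ≤ 1 := by
    rw [norm_pow]; exact pow_le_one₀ (norm_nonneg _) hQ.le
  calc _ ≤ 1 * 1 * C2 * C1 := by
        gcongr
        · exact h1.le
        · exact hb2 r
        · exact hb1 r
    _ = _ := by ring

lemma pw_bound {a Q : ℂ} (hQ : ‖Q‖ < 1) (x : ℂ) (hx : ‖x‖ ≤ ‖a‖) (p r m : ℕ) :
    ‖(x ^ r * Q ^ m) ^ p‖ ≤ ((1 + ‖a‖) ^ p) ^ r := by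
  rw [norm_pow, norm_mul, norm_pow, norm_pow, ← pow_mul, mul_comm p r, pow_mul]
  have h2 : ‖Q‖ ^ m ≤ 1 := pow_le_one₀ (norm_nonneg _) hQ.le
  gcongr
  calc ‖x‖ ^ r * ‖Q‖ ^ m ≤ (1 + ‖a‖) ^ r * 1 := by
        gcongr
        linarith
    _ = _ := by ring

lemma aQ_le {a Q : ℂ} (hQ : ‖Q‖ < 1) (n : ℕ) : ‖a * Q ^ n‖ ≤ ‖a‖ := by
  rw [norm_mul, norm_pow]
  exact mul_le_of_le_one_right (norm_nonneg _) (pow_le_one₀ (norm_nonneg _) hQ.le)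

lemma bL_bound {a Q : ℂ} (hQ : ‖Q‖ < 1) (ha : ∀ j : ℕ, a * Q * Q ^ j ≠ 1) (p : ℕ) :
    ∃ C : ℝ, 0 ≤ C ∧ ∀ s r, ‖bL a Q p s r‖ ≤ C * ((1 + ‖a‖) ^ p) ^ r := by
  obtain ⟨C, hC, hb⟩ := bK_bound hQ ha
  refine ⟨C + ‖a‖ * (1 + ‖a‖) ^ p * C, by positivity, fun s r => ?_⟩
  rw [bL]
  refine (norm_sub_le _ _).trans ?_
  rw [norm_mul, norm_mul, norm_mul (a * Q ^ (2 * r + 1))]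
  calc _ ≤ ((1 + ‖a‖) ^ p) ^ r * C + ‖a‖ * ((1 + ‖a‖) ^ p) ^ (r + 1) * C := by
        gcongr
        · exact pw_bound hQ a le_rfl _ _ _
        · exact hb _ _
        · exact aQ_le hQ _
        · exact pw_bound hQ a le_rfl _ _ _
        · exact hb _ _
    _ = _ := by ring

lemma final_ge {q a : ℂ} (h1 : ‖q‖ < 1) (ha : ∀ j : ℕ, a * q ^ 2 * (q ^ 2) ^ j ≠ 1)
    (p d n : ℕ) :
    (-1 : ℂ) ^ n * a ^ ((p + d + 2) * n) * q ^ (2 * (p + d + 2) * n ^ 2 +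
        (2 * (p + d + 2) - 2 * (p + 2) + 1) * n) *
        (qPoch (-q) (q ^ 2) n * qPochInf (-(a * q ^ (2 * n + 3))) (q ^ 2) /
          (qPoch (q ^ 2) (q ^ 2) n * qPochInf (a * q ^ (2 * n + 2)) (q ^ 2))) *
        (1 + a * q ^ (2 * n + 1) -
          (1 + q ^ (2 * n + 1)) * a ^ (p + 2) * q ^ ((2 * (p + 2) - 1) * (2 * n + 1))) =
    (uc a (q ^ 2) n * ((a * q ^ 2) ^ n * (q ^ 2) ^ (n ^ 2)) ^ (d + 1)) *
      ((a ^ n * (q ^ 2) ^ (n ^ 2)) ^ p * (qPoch (-q) (q ^ 2) n * a ^ n * q ^ (n ^ 2) *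
          qPochInf (-(a * q ^ (2 * n + 1))) (q ^ 2) / qPochInf (a * q ^ 2) (q ^ 2)) -
        a * (q ^ 2) ^ (2 * n + 1) * (a ^ (n + 1) * (q ^ 2) ^ ((n + 1) ^ 2)) ^ p *
        (qPoch (-q) (q ^ 2) (n + 1) * a ^ (n + 1) * q ^ ((n + 1) ^ 2) *
          qPochInf (-(a * q ^ (2 * (n + 1) + 1))) (q ^ 2) / qPochInf (a * q ^ 2) (q ^ 2))) := by
  have hQ := norm_sq_lt h1
  have s1 := qPochInf_split hQ (a * q ^ 2) n
  have s2 := qPochInf_split hQ (-(a * q ^ (2 * n + 1))) 1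
  have s3 := qPoch_succ (-q) (q ^ 2) n
  have n1 := qPochInf_ne_zero hQ ha
  rw [show a * q ^ 2 * (q ^ 2) ^ n = a * q ^ (2 * n + 2) by ring] at s1
  rw [show -(a * q ^ (2 * n + 1)) * (q ^ 2) ^ 1 = -(a * q ^ (2 * n + 3)) by ring] at s2
  have s4 : qPoch (-(a * q ^ (2 * n + 1))) (q ^ 2) 1 = 1 + a * q ^ (2 * n + 1) := by
    simp [qPoch]
  rw [s1] at n1
  have m1 := left_ne_zero_of_mul n1
  have m2 := right_ne_zero_of_mul n1
  have m3 := qPoch_QQ_ne hQ n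
  rw [s1, s2, s3, s4, uc, show 2 * (n + 1) + 1 = 2 * n + 3 by ring]
  have e1 : 2 * (p + d + 2) * n ^ 2 + (2 * (p + d + 2) - 2 * (p + 2) + 1) * n =
      2 * n.choose 2 + 2 * (d + 1) * n + 2 * (d + 1) * n ^ 2 + 2 * p * n ^ 2 + n ^ 2 := by
    rw [show 2 * (p + d + 2) - 2 * (p + 2) + 1 = 2 * d + 1 by omega]
    have := two_choose n
    linear_combination this
  rw [e1, show 2 * (p + 2) - 1 = 2 * p + 3 by omega]
  generalize qPoch (q ^ 2) (q ^ 2) n = P1 at *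
  generalize qPoch (a * q ^ 2) (q ^ 2) n = P2 at *
  generalize qPoch (-q) (q ^ 2) n = P3 at *
  generalize qPochInf (-(a * q ^ (2 * n + 3))) (q ^ 2) = P4 at *
  generalize qPochInf (a * q ^ (2 * n + 2)) (q ^ 2) = P5 at *
  generalize n.choose 2 = c at *
  have f1 : ∀ A B C D E F G H I: ℂ, A * (P3 * P4 / (P1 * P5)) * (B - C) = (A * P3 * P4 * (B - C)) / (P1 * P5) := by
    intros; ring
  have f2 : ∀ A B C D E : ℂ, A * P2 / P1 * B * (C * (D / (P2 * P5)) - E / (P2 * P5)) =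
      A * B * (C * D - E) / (P1 * P5) := by
    intros; field_simp
  rw [f1 _ _ _ 0 0 0 0 0 0, mul_div_assoc' (a * (q ^ 2) ^ (2 * n + 1) * _), f2]
  congr 1
  ring

lemma final_one {q a : ℂ} (h1 : ‖q‖ < 1) (ha : ∀ j : ℕ, a * q ^ 2 * (q ^ 2) ^ j ≠ 1)
    (K n : ℕ) :
    (-1 : ℂ) ^ n * a ^ ((K + 2) * n) * q ^ (2 * (K + 2) * n ^ 2 +
        (2 * (K + 2) - 2 * 1 + 1) * n) *
        (qPoch (-q) (q ^ 2) n * qPochInf (-(a * q ^ (2 * n + 3))) (q ^ 2) /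
          (qPoch (q ^ 2) (q ^ 2) n * qPochInf (a * q ^ (2 * n + 2)) (q ^ 2))) *
        (1 + a * q ^ (2 * n + 1) -
          (1 + q ^ (2 * n + 1)) * a ^ 1 * q ^ ((2 * 1 - 1) * (2 * n + 1))) =
    (uc a (q ^ 2) n * ((a * q ^ 2) ^ n * (q ^ 2) ^ (n ^ 2)) ^ (K + 1) *
      (1 - a * (q ^ 2) ^ (2 * n + 1)) / (1 - a * q ^ 2)) *
      (qPoch (-q) (q ^ 2) n * (a * q ^ 2) ^ n * q ^ (n ^ 2) *
          qPochInf (-(a * q ^ 2 * q ^ (2 * n + 1))) (q ^ 2) /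
            qPochInf (a * q ^ 2 * q ^ 2) (q ^ 2)) := by
  have hQ := norm_sq_lt h1
  have s1 := qPochInf_split hQ (a * q ^ 2) n
  have s2 := qPochInf_split hQ (a * q ^ 2) 1
  have n1 := qPochInf_ne_zero hQ ha
  have n2 := n1
  rw [show a * q ^ 2 * (q ^ 2) ^ n = a * q ^ (2 * n + 2) by ring] at s1
  have s4 : qPoch (a * q ^ 2) (q ^ 2) 1 = 1 - a * q ^ 2 := by
    simp [qPoch]
  rw [s4, pow_one] at s2
  rw [show -(a * q ^ 2 * q ^ (2 * n + 1)) = -(a * q ^ (2 * n + 3)) by ring]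
  have s5 := s2.symm.trans s1
  rw [s1] at n1
  have m1 := left_ne_zero_of_mul n1
  have m2 := right_ne_zero_of_mul n1
  have m3 := qPoch_QQ_ne hQ n
  rw [uc]
  have e1 : 2 * (K + 2) * n ^ 2 + (2 * (K + 2) - 2 * 1 + 1) * n =
      2 * n.choose 2 + 2 * (K + 1) * n + 2 * (K + 1) * n ^ 2 + 2 * n + n ^ 2 := by
    rw [show 2 * (K + 2) - 2 * 1 + 1 = 2 * K + 3 by omega]
    have := two_choose n
    linear_combination this
  rw [e1, show 2 * 1 - 1 = 1 by omega]
  rw [div_mul_div_comm, s5]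
  generalize qPoch (q ^ 2) (q ^ 2) n = P1 at *
  generalize qPoch (a * q ^ 2) (q ^ 2) n = P2 at *
  generalize qPoch (-q) (q ^ 2) n = P3 at *
  generalize qPochInf (-(a * q ^ (2 * n + 3))) (q ^ 2) = P4 at *
  generalize qPochInf (a * q ^ (2 * n + 2)) (q ^ 2) = P5 at *
  generalize n.choose 2 = c at *
  have f1 : ∀ A B : ℂ, A * (P3 * P4 / (P1 * P5)) * B = (A * P3 * P4 * B) / (P1 * P5) := by
    intros; ring
  have f2 : ∀ A B C D : ℂ, A * P2 / P1 * B * C * D / (P2 * P5) =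
      A * B * C * D / (P1 * P5) := by
    intros; field_simp
  rw [f1, f2]
  congr 1
  ring

lemma part_ge {q a : ℂ} (h1 : ‖q‖ < 1) (ha : ∀ j : ℕ, a * q ^ 2 * (q ^ 2) ^ j ≠ 1)
    (p d : ℕ) :
    ∑' s, w2 q a (p + 2) 0 s * fE (q ^ 2) (p + d) (fun m => w2 q a (p + 2) (m + 1)) s =
    ∑' r, (uc a (q ^ 2) r * ((a * q ^ 2) ^ r * (q ^ 2) ^ (r ^ 2)) ^ (d + 1)) *
      ((a ^ r * (q ^ 2) ^ (r ^ 2)) ^ p * (qPoch (-q) (q ^ 2) r * a ^ r * q ^ (r ^ 2) *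
          qPochInf (-(a * q ^ (2 * r + 1))) (q ^ 2) / qPochInf (a * q ^ 2) (q ^ 2)) -
        a * (q ^ 2) ^ (2 * r + 1) * (a ^ (r + 1) * (q ^ 2) ^ ((r + 1) ^ 2)) ^ p *
        (qPoch (-q) (q ^ 2) (r + 1) * a ^ (r + 1) * q ^ ((r + 1) ^ 2) *
          qPochInf (-(a * q ^ (2 * (r + 1) + 1))) (q ^ 2) / qPochInf (a * q ^ 2) (q ^ 2))) := by
  have hQ := norm_sq_lt h1
  have e1 : ∀ s, fE (q ^ 2) (p + d) (fun m => w2 q a (p + 2) (m + 1)) s =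
      ∑ r ∈ Finset.range (s + 1), (uc a (q ^ 2) r *
        ((a * q ^ 2) ^ r * (q ^ 2) ^ (r ^ 2)) ^ (d + 1)) * bL a (q ^ 2) p s r := by
    intro s
    rw [← G2 hQ ha d p s]
    refine fE_congr _ _ _ _ (fun m _ s => ?_) s
    simp only [w2]
    rw [if_neg (by omega : ¬ (m + 1 = 0))]
    by_cases h : m < p
    · rw [if_neg (by omega), if_pos h]; ring
    · rw [if_pos (by omega), if_neg h]; ring
  simp only [e1]
  obtain ⟨C, hC, hb⟩ := w2_bound h1 a (p + 2)
  obtain ⟨C1, hC1, hb1⟩ := uc_bound (a := a) hQ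
  obtain ⟨C2, hC2, hb2⟩ := bL_bound hQ ha p
  have hR : (1 : ℝ) ≤ 1 + ‖a‖ := by linarith [norm_nonneg a]
  rw [swap_sum (C := C) (C' := C1 * C2) (R := 1 + ‖a‖)
    (R' := (1 + ‖a‖) ^ (d + 1) * (1 + ‖a‖) ^ p) (ρ := ‖q‖)
    hC (by positivity) (by positivity) (one_le_mul_of_one_le_of_one_le (one_le_pow₀ hR)
      (one_le_pow₀ hR)) (norm_nonneg _) h1 (hb 0)]
  · refine tsum_congr fun r => ?_
    have g1 := (gamma_sum h1 ha r).mul_left ((a ^ r * (q ^ 2) ^ (r ^ 2)) ^ p)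
    have g2 := (gamma_sum h1 ha (r + 1)).mul_left
      (a * (q ^ 2) ^ (2 * r + 1) * (a ^ (r + 1) * (q ^ 2) ^ ((r + 1) ^ 2)) ^ p)
    have g3 := ((g1.sub g2).mul_left
      (uc a (q ^ 2) r * ((a * q ^ 2) ^ r * (q ^ 2) ^ (r ^ 2)) ^ (d + 1))).tsum_eq
    rw [← g3]
    refine tsum_congr fun s => ?_
    simp only [w2, bL]
    rw [if_neg (by omega), if_pos trivial]
    ring
  · intro s r
    rw [norm_mul, norm_mul]
    calc _ ≤ C1 * ((1 + ‖a‖) ^ (d + 1)) ^ r * (C2 * ((1 + ‖a‖) ^ p) ^ r) := by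
          gcongr
          · exact hb1 r
          · exact pw_bound hQ _ (by simpa using aQ_le (a := a) hQ 1) _ _ _
          · exact hb2 s r
      _ = _ := by rw [mul_pow]; ring
  · intro s r h
    rw [bL_gt _ _ _ h, mul_zero]

lemma part_one {q a : ℂ} (h1 : ‖q‖ < 1) (ha : ∀ j : ℕ, a * q ^ 2 * (q ^ 2) ^ j ≠ 1)
    (K : ℕ) :
    ∑' s, w2 q a 1 0 s * fE (q ^ 2) K (fun m => w2 q a 1 (m + 1)) s =
    ∑' n, (uc a (q ^ 2) n * ((a * q ^ 2) ^ n * (q ^ 2) ^ (n ^ 2)) ^ (K + 1) *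
      (1 - a * (q ^ 2) ^ (2 * n + 1)) / (1 - a * q ^ 2)) *
      (qPoch (-q) (q ^ 2) n * (a * q ^ 2) ^ n * q ^ (n ^ 2) *
          qPochInf (-(a * q ^ 2 * q ^ (2 * n + 1))) (q ^ 2) /
            qPochInf (a * q ^ 2 * q ^ 2) (q ^ 2)) := by
  have hQ := norm_sq_lt h1
  have e1 : ∀ s, fE (q ^ 2) K (fun m => w2 q a 1 (m + 1)) s =
      ∑ r ∈ Finset.range (s + 1), (uc a (q ^ 2) r *
        ((a * q ^ 2) ^ r * (q ^ 2) ^ (r ^ 2)) ^ (K + 1) *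
      (1 - a * (q ^ 2) ^ (2 * r + 1)) / (1 - a * q ^ 2)) * bK (a * q ^ 2) (q ^ 2) s r := by
    intro s
    rw [← G1 hQ ha K s]
    refine fE_congr _ _ _ _ (fun m _ s => ?_) s
    simp only [w2]
    rw [if_neg (by omega : ¬ (m + 1 = 0)), if_pos (by omega)]
    ring
  simp only [e1]
  obtain ⟨C, hC, hb⟩ := w2_bound h1 a 1
  obtain ⟨C1, hC1, hb1⟩ := uc_bound (a := a) hQ
  obtain ⟨C2, hC2, hb2⟩ := bK_bound hQ (shift_ne' ha)
  have hR : (1 : ℝ) ≤ 1 + ‖a‖ := by linarith [norm_nonneg a]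
  rw [swap_sum (C := C) (C' := C1 * (1 + ‖a‖) * ‖(1 - a * q ^ 2)⁻¹‖ * C2) (R := 1 + ‖a‖)
    (R' := (1 + ‖a‖) ^ (K + 1)) (ρ := ‖q‖)
    hC (by positivity) (by positivity) (one_le_pow₀ hR) (norm_nonneg _) h1 (hb 0)]
  · refine tsum_congr fun r => ?_
    have g1 := ((gamma_sum h1 (shift_ne' ha) r).mul_left (uc a (q ^ 2) r *
        ((a * q ^ 2) ^ r * (q ^ 2) ^ (r ^ 2)) ^ (K + 1) *
      (1 - a * (q ^ 2) ^ (2 * r + 1)) / (1 - a * q ^ 2))).tsum_eq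
    rw [← g1]
    refine tsum_congr fun s => ?_
    simp only [w2]
    rw [if_pos (by omega), if_pos trivial]
    ring
  · intro s r
    rw [div_eq_mul_inv, norm_mul, norm_mul, norm_mul, norm_mul]
    have h5 : ‖1 - a * (q ^ 2) ^ (2 * r + 1)‖ ≤ 1 + ‖a‖ := by
      refine (norm_sub_le _ _).trans ?_
      rw [norm_one]
      have := aQ_le (a := a) hQ (2 * r + 1)
      linarith
    calc _ ≤ C1 * ((1 + ‖a‖) ^ (K + 1)) ^ r * (1 + ‖a‖) * ‖(1 - a * q ^ 2)⁻¹‖ * C2 := by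
          gcongr
          · exact hb1 r
          · exact pw_bound hQ _ (by simpa using aQ_le (a := a) hQ 1) _ _ _
          · exact hb2 s r
      _ = _ := by ring
  · intro s r h
    rw [bK_gt _ _ h, mul_zero]

/-- Theorem 5.1 (with `q` replaced by `q²`).  In the second sum the tuple encodes
`s_1 ≥ ⋯ ≥ s_{k-1} ≥ 0` via `s_m = t (m-1)` (with `s_k = 0`), and in the third sum
`s_1 ≥ ⋯ ≥ s_{2k-2} ≥ 0` via `s_m = t (m-1)` (with `s_{2k-1} = 0`). -/
theorem theorem_5_1 (q a : ℂ) (h0 : 0 < ‖q‖) (h1 : ‖q‖ < 1)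
    (ha : ∀ m : ℕ, 1 ≤ m → a * q ^ (2 * m) ≠ 1)
    (k i : ℕ) (hk : 2 ≤ k) (hi1 : 1 ≤ i) (hik : i ≤ k) :
    (∑' n : ℕ, (-1 : ℂ) ^ n * a ^ (k * n) * q ^ (2 * k * n ^ 2 + (2 * k - 2 * i + 1) * n) *
        (qPoch (-q) (q ^ 2) n * qPochInf (-(a * q ^ (2 * n + 3))) (q ^ 2) /
          (qPoch (q ^ 2) (q ^ 2) n * qPochInf (a * q ^ (2 * n + 2)) (q ^ 2))) *
        (1 + a * q ^ (2 * n + 1) -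
          (1 + q ^ (2 * n + 1)) * a ^ i * q ^ ((2 * i - 1) * (2 * n + 1)))) =
      (∑' s : {s : Fin (k - 1) → ℕ // Antitone s},
        (let t : ℕ → ℕ := fun m => if h : m < k - 1 then s.1 ⟨m, h⟩ else 0
         a ^ (∑ m ∈ Finset.range (k - 1), t m) * qPoch (-q) (q ^ 2) (t 0) *
           q ^ ((t 0) ^ 2 + 2 * ∑ m ∈ Finset.Ico 1 (k - 1), (t m) ^ 2 +
                2 * ∑ m ∈ Finset.Ico (i - 1) (k - 1), t m) /
           ∏ m ∈ Finset.range (k - 1), qPoch (q ^ 2) (q ^ 2) (t m - t (m + 1)))) ∧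
    (∑' s : {s : Fin (k - 1) → ℕ // Antitone s},
        (let t : ℕ → ℕ := fun m => if h : m < k - 1 then s.1 ⟨m, h⟩ else 0
         a ^ (∑ m ∈ Finset.range (k - 1), t m) * qPoch (-q) (q ^ 2) (t 0) *
           q ^ ((t 0) ^ 2 + 2 * ∑ m ∈ Finset.Ico 1 (k - 1), (t m) ^ 2 +
                2 * ∑ m ∈ Finset.Ico (i - 1) (k - 1), t m) /
           ∏ m ∈ Finset.range (k - 1), qPoch (q ^ 2) (q ^ 2) (t m - t (m + 1)))) =
      (∑' s : {s : Fin (2 * k - 2) → ℕ // Antitone s},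
        (let t : ℕ → ℕ := fun m => if h : m < 2 * k - 2 then s.1 ⟨m, h⟩ else 0
         a ^ (∑ m ∈ Finset.range (k - 1), t (2 * m)) *
           q ^ (∑ m ∈ Finset.range (2 * k - 2), (t m) ^ 2 +
                2 * ∑ m ∈ Finset.Ico (i - 1) (k - 1), t (2 * m)) /
           ∏ m ∈ Finset.range (2 * k - 2), qPoch (q ^ 2) (q ^ 2) (t m - t (m + 1)))) := by
  have hQ := norm_sq_lt h1
  have ha' : ∀ j : ℕ, a * q ^ 2 * (q ^ 2) ^ j ≠ 1 := by
    intro j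
    have := ha (j + 1) (by omega)
    rwa [show a * q ^ (2 * (j + 1)) = a * q ^ 2 * (q ^ 2) ^ j by ring] at this
  obtain ⟨K, rfl⟩ : ∃ K, k = K + 2 := ⟨k - 2, by omega⟩
  obtain ⟨C, hC, hb⟩ := w2_bound h1 a i
  have hR : (0 : ℝ) ≤ 1 + ‖a‖ := by positivity
  have S2 := multi_sum' hQ K (K + 2 - 1) (by omega) (w2 q a i)
    (fun m => bound_summable h1 hR (hb m))
  have S3 := multi_sum' hQ (2 * K + 1) (2 * (K + 2) - 2) (by omega) (w3 q a i)
    (fun m => bound_summable h1 hR (w3_bound h1 a i m))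
  have T2 : (∑' s : {s : Fin (K + 2 - 1) → ℕ // Antitone s},
        (let t : ℕ → ℕ := fun m => if h : m < K + 2 - 1 then s.1 ⟨m, h⟩ else 0
         a ^ (∑ m ∈ Finset.range (K + 2 - 1), t m) * qPoch (-q) (q ^ 2) (t 0) *
           q ^ ((t 0) ^ 2 + 2 * ∑ m ∈ Finset.Ico 1 (K + 2 - 1), (t m) ^ 2 +
                2 * ∑ m ∈ Finset.Ico (i - 1) (K + 2 - 1), t m) /
           ∏ m ∈ Finset.range (K + 2 - 1), qPoch (q ^ 2) (q ^ 2) (t m - t (m + 1)))) =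
      ∑' s, w2 q a i 0 s * fE (q ^ 2) K (fun m => w2 q a i (m + 1)) s := by
    rw [← S2]
    refine tsum_congr fun s => ?_
    rw [← term2 q a i (K + 2 - 1) (by omega) (ext0 s.1)]
    rfl
  have T3 : (∑' s : {s : Fin (2 * (K + 2) - 2) → ℕ // Antitone s},
        (let t : ℕ → ℕ := fun m => if h : m < 2 * (K + 2) - 2 then s.1 ⟨m, h⟩ else 0
         a ^ (∑ m ∈ Finset.range (K + 2 - 1), t (2 * m)) *
           q ^ (∑ m ∈ Finset.range (2 * (K + 2) - 2), (t m) ^ 2 +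
                2 * ∑ m ∈ Finset.Ico (i - 1) (K + 2 - 1), t (2 * m)) /
           ∏ m ∈ Finset.range (2 * (K + 2) - 2), qPoch (q ^ 2) (q ^ 2) (t m - t (m + 1)))) =
      ∑' s, w3 q a i 0 s * fE (q ^ 2) (2 * K + 1) (fun m => w3 q a i (m + 1)) s := by
    rw [← S3]
    refine tsum_congr fun s => ?_
    have := term3 q a i (K + 2 - 1) (ext0 s.1)
    rw [show 2 * (K + 2 - 1) = 2 * (K + 2) - 2 by omega] at this
    rw [← this]
    rfl
  rw [T2, T3]
  constructor
  · rcases Nat.lt_or_ge 1 i with h | h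
    · obtain ⟨p, rfl⟩ : ∃ p, i = p + 2 := ⟨i - 2, by omega⟩
      obtain ⟨d, rfl⟩ : ∃ d, K = p + d := ⟨K - p, by omega⟩
      rw [part_ge h1 ha' p d]
      exact tsum_congr fun n => final_ge h1 ha' p d n
    · obtain rfl : i = 1 := by omega
      rw [part_one h1 ha' K]
      exact tsum_congr fun n => final_one h1 ha' K n
  · refine tsum_congr fun s => ?_
    rw [two_three h1 K (fun m => w2 q a i (m + 1)) (fun m => w3 q a i (m + 1)) ?_ ?_ s]
    · simp only [w2, w3]
      simp only [Nat.zero_mod, Nat.zero_div, if_true]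
      ring
    · intro m s
      simp only [w3]
      rw [if_neg (by omega), one_mul]
    · intro m s
      simp only [w2, w3]
      rw [if_neg (by omega : ¬ (m + 1 = 0)), if_pos (by omega : (2 * m + 1 + 1) % 2 = 0),
        show (2 * m + 1 + 1) / 2 = m + 1 by omega]
      ring
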